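/- Let f ∈ ℝ[x,y,z] be homogeneous of degree d, hyperbolic with respect to a point e ∈ ℝ³ with f(e) > 0, and suppose f and its gradient have no common zero in ℂ³ ∖ {0}. Let g ∈ ℝ[x,y,z] be homogeneous of degree d−1 with g(e) > 0 such that g interlaces f with respect to e, and suppose f and g intersect transversally, i.e., at every common zero p ∈ ℂ³ ∖ {0} of f and g the gradients ∇f(p) and ∇g(p) are linearly independent. Let S ⊆ ℂ³ ∖ {0} be a set of common zeros of f and g such that every common zero of f and g in ℂ³ ∖ {0} is a nonzero scalar multiple of exactly one element of S ∪ conj(S), and no element of S is a nonzero scalar multiple of the conjugate of an element of S. Let a = (a₁, …, a_d) be a basis of the ℂ-vector space of homogeneous polynomials of degree d−1 in ℂ[x,y,z] vanishing at every point of S, with a₁ = g. Then there exists a unique triple (M₁, M₂, M₃) of Hermitian d×d complex matrices such that, setting M = xM₁ + yM₂ + zM₃, one has a·M = (f, 0, …, 0) and M·ā^T = (f, 0, …, 0)^T as identities of vectors of polynomials; moreover there exists c ∈ ℝ with c > 0 such that f = c·det(M), and e₁M₁ + e₂M₂ + e₃M₃ is positive definite. -/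

import Mathlib

open scoped ComplexOrder

/-- The complexification of a real polynomial in three variables. -/
noncomputable def complexify (f : MvPolynomial (Fin 3) ℝ) : MvPolynomial (Fin 3) ℂ :=
  MvPolynomial.map (algebraMap ℝ ℂ) f

/-- `f` is hyperbolic with respect to `e ∈ ℝ³`: `f(e) ≠ 0` and for every `p ∈ ℝ³` all
complex roots of `t ↦ f(te + p)` are real. -/
def IsHyperbolic (f : MvPolynomial (Fin 3) ℝ) (e : Fin 3 → ℝ) : Prop :=
  MvPolynomial.eval e f ≠ 0 ∧
    ∀ p : Fin 3 → ℝ, ∀ t : ℂ,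
      MvPolynomial.eval (fun i => t * (e i : ℂ) + (p i : ℂ)) (complexify f) = 0 →
      t.im = 0

/-- The univariate real polynomial `t ↦ f(t • e + p)`. -/
noncomputable def restrictLine (f : MvPolynomial (Fin 3) ℝ) (e p : Fin 3 → ℝ) :
    Polynomial ℝ :=
  MvPolynomial.aeval (fun i => Polynomial.C (p i) + Polynomial.C (e i) * Polynomial.X) f

/-- `g` (homogeneous of degree `d - 1`) interlaces `f` (homogeneous of degree `d`) with
respect to `e`: for every `p ∈ ℝ³` the polynomials `t ↦ f(te + p)` and `t ↦ g(te + p)`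
have only real roots `t₁ ≤ … ≤ t_d` resp. `s₁ ≤ … ≤ s_{d-1}` (listed with multiplicity in
increasing order) and these satisfy `tᵢ ≤ sᵢ ≤ tᵢ₊₁` for all `1 ≤ i ≤ d - 1`. -/
def Interlaces (d : ℕ) (f g : MvPolynomial (Fin 3) ℝ) (e : Fin 3 → ℝ) : Prop :=
  ∀ p : Fin 3 → ℝ, ∃ (t : Fin d → ℝ) (s : Fin (d - 1) → ℝ),
    Monotone t ∧ Monotone s ∧
    restrictLine f e p =
      Polynomial.C (MvPolynomial.eval e f) *
        ∏ i, (Polynomial.X - Polynomial.C (t i)) ∧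
    restrictLine g e p =
      Polynomial.C (MvPolynomial.eval e g) *
        ∏ i, (Polynomial.X - Polynomial.C (s i)) ∧
    ∀ (i : ℕ) (hi : i + 1 < d),
      t ⟨i, by omega⟩ ≤ s ⟨i, by omega⟩ ∧ s ⟨i, by omega⟩ ≤ t ⟨i + 1, hi⟩

/-- The Hermitian pencil `x M₁ + y M₂ + z M₃` as a matrix of polynomials in `ℂ[x,y,z]`. -/
noncomputable def pencil {d : ℕ} (M₁ M₂ M₃ : Matrix (Fin d) (Fin d) ℂ) :
    Matrix (Fin d) (Fin d) (MvPolynomial (Fin 3) ℂ) := fun i j =>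
  MvPolynomial.X 0 * MvPolynomial.C (M₁ i j) +
    MvPolynomial.X 1 * MvPolynomial.C (M₂ i j) +
    MvPolynomial.X 2 * MvPolynomial.C (M₃ i j)

/-- Coordinatewise complex conjugation on `ℂ³`. -/
def conjPt (p : Fin 3 → ℂ) : Fin 3 → ℂ := fun i => (starRingEnd ℂ) (p i)

open scoped Matrix

/-!
Write `F`, `G` for the complexified `f`, `g`. The interlacing is strict on every real line through
`e` because `F` and `G` have no common real zero, so Lagrange interpolation at the zeros of `f`
gives a quadrature rule with positive weights: the top coefficient of a polynomial `q` of degree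
`< d` on the line is `∑ ω_r g(x_r) q(x_r)`, `ω_r > 0`. Counting dimensions, `S` has exactly
`d (d - 1) / 2` points, so `F` and `G` meet in `d (d - 1)` distinct points and Noether's
fundamental theorem applies: a form vanishing on these points lies in the ideal `(F, G)`.

Hence `ā_k a_i ≡ G b_{ki}` modulo `F` for a Hermitian matrix `b` of forms of degree `d - 1` whose
row at the index of `g` is `a`; if `M` exists, `b` is a multiple of its adjugate. The quadrature
writes `b(e)` as `XᴴWX` with `W` positive diagonal, so `b(e)` is positive definite. Expanding
`b M = F · 1` to first order at `e` dictates `M(e) = F(e) b(e)⁻¹` and its derivatives, and the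
quadrature shows that the pencil so defined satisfies `a M = (F, 0, …, 0)`: the error vanishes to
second order at `e`, hence at all zeros of `f` on each line through `e`. Multiplying `a M` by the
adjugate of `M` gives `F ∣ G det M`, hence `det M` is a multiple of `F`. If `a N = 0` and
`N āᵀ = 0`, then `b N = F Λ` for a constant matrix `Λ` with `Λ āᵀ = 0`, so `Λ = 0` and `N = 0`.
-/

section HomogeneousPolynomials

open MvPolynomial

variable {σ R : Type*}

lemma eval_smul_of_isHomogeneous [CommSemiring R] {h : MvPolynomial σ R} {m : ℕ}
    (hh : h.IsHomogeneous m) (c : R) (x : σ → R) : eval (c • x) h = c ^ m * eval x h := by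
  rw [eval_eq, eval_eq, Finset.mul_sum]
  refine Finset.sum_congr rfl fun s hs => ?_
  have hpow : ∏ i ∈ s.support, c ^ s i = c ^ m := by
    rw [Finset.prod_pow_eq_pow_sum, ← hh.degree_eq_sum_deg_support hs]
  simp only [Pi.smul_apply, smul_eq_mul, mul_pow, Finset.prod_mul_distrib, hpow]
  ring

lemma homogeneousComponent_mul_of_isHomogeneous [CommSemiring R] {m : ℕ}
    {ℓ : MvPolynomial σ R} (hℓ : ℓ.IsHomogeneous m) (y : MvPolynomial σ R) (k : ℕ) :
    homogeneousComponent (m + k) (ℓ * y) = ℓ * homogeneousComponent k y := by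
  conv_lhs => rw [← sum_homogeneousComponent y, Finset.mul_sum, map_sum]
  have component_term (i : ℕ) : homogeneousComponent (m + k) (ℓ * homogeneousComponent i y) =
      if k = i then ℓ * homogeneousComponent i y else 0 := by
    rw [homogeneousComponent_of_mem (hℓ.mul (homogeneousComponent_isHomogeneous i y))]
    simp only [Nat.add_left_cancel_iff]
  simp only [component_term, Finset.sum_ite_eq, Finset.mem_range]
  split_ifs with hk
  · rfl
  · rw [homogeneousComponent_eq_zero _ _ (by omega), mul_zero]

lemma exists_isHomogeneous_eq_mul_of_dvd [CommSemiring R] {m k : ℕ} {ℓ y : MvPolynomial σ R}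
    (hℓ : ℓ.IsHomogeneous m) (hy : y.IsHomogeneous (m + k)) (hdvd : ℓ ∣ y) :
    ∃ y', y'.IsHomogeneous k ∧ y = ℓ * y' := by
  obtain ⟨q, rfl⟩ := hdvd
  refine ⟨homogeneousComponent k q, homogeneousComponent_isHomogeneous k q, ?_⟩
  rw [← homogeneousComponent_mul_of_isHomogeneous hℓ, homogeneousComponent_eq_self hy]

/-- A linear functional on `σ → R`, regarded as a polynomial in the coordinates. -/
noncomputable def linearForm [CommSemiring R] [Fintype σ] [DecidableEq σ]
    (φ : (σ → R) →ₗ[R] R) : MvPolynomial σ R :=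
  ∑ i, C (φ (Pi.single i 1)) * X i

@[simp]
lemma eval_linearForm [CommSemiring R] [Fintype σ] [DecidableEq σ] (φ : (σ → R) →ₗ[R] R)
    (x : σ → R) : eval x (linearForm φ) = φ x := by
  conv_rhs => rw [← LinearMap.sum_single_apply (fun _ => R) x]
  simp only [linearForm, map_sum, map_mul, eval_C, eval_X]
  refine Finset.sum_congr rfl fun i _ => ?_
  have hsmul : (Pi.single i (x i) : σ → R) = x i • Pi.single i 1 := by simp [← Pi.single_smul]
  simp [hsmul, mul_comm]

lemma isHomogeneous_linearForm [CommSemiring R] [Fintype σ] [DecidableEq σ]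
    (φ : (σ → R) →ₗ[R] R) : (linearForm φ).IsHomogeneous 1 :=
  IsHomogeneous.sum _ _ _ fun _ _ => isHomogeneous_C_mul_X _ _

lemma linearForm_ne_zero [CommSemiring R] [Fintype σ] [DecidableEq σ] {φ : (σ → R) →ₗ[R] R}
    (hφ : φ ≠ 0) : linearForm φ ≠ 0 := by
  contrapose! hφ
  ext1 i
  ext
  rw [LinearMap.comp_apply, ← eval_linearForm, hφ]
  simp

lemma prime_linearForm {K : Type*} [Field K] [Fintype σ] [DecidableEq σ] {φ : (σ → K) →ₗ[K] K}
    (hφ : φ ≠ 0) : Prime (linearForm φ) := by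
  have hne := linearForm_ne_zero hφ
  refine (irreducible_of_totalDegree_eq_one ((isHomogeneous_linearForm φ).totalDegree hne)
    fun x hx => ?_).prime
  obtain ⟨s, hs⟩ := ne_zero_iff.mp hne
  exact (ne_zero_of_dvd_ne_zero hs (hx s)).isUnit

lemma finrank_homogeneousSubmodule [CommRing R] [Nontrivial R] [Fintype σ] (k : ℕ) :
    Module.finrank R (homogeneousSubmodule σ R k) = (Fintype.card σ).multichoose k := by
  classical
  have hdegree : {s : σ →₀ ℕ | s.degree = k} = (Finset.univ : Finset σ).finsuppAntidiag k := by
    ext s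
    simp [Finsupp.degree_eq_sum]
  rw [homogeneousSubmodule_eq_finsupp_supported, ← restrictSupport,
    Module.finrank_eq_nat_card_basis (basisRestrictSupport R {s : σ →₀ ℕ | s.degree = k}),
    hdegree, Nat.card_coe_set_eq, Set.ncard_coe_finset,
    Finset.card_finsuppAntidiag_nat_eq_multichoose, Finset.card_univ]

lemma two_mul_finrank_homogeneousSubmodule_fin_three [CommRing R] [Nontrivial R] (k : ℕ) :
    2 * Module.finrank R (homogeneousSubmodule (Fin 3) R k) = (k + 1) * (k + 2) := by
  rw [finrank_homogeneousSubmodule, Fintype.card_fin, Nat.multichoose_eq,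
    show 3 + k - 1 = k + 2 by omega, Nat.choose_symm_add, Nat.choose_two_right,
    Nat.mul_div_cancel' (Nat.even_mul_pred_self (k + 2)).two_dvd]
  simp only [Nat.add_succ_sub_one]
  ring

end HomogeneousPolynomials

section Lines

open MvPolynomial

variable {σ R K : Type*}

/-- Restriction of a polynomial on `σ → R` to the affine line `t ↦ t • e + p`, as a polynomial
in `t`. -/
noncomputable def lineHom [CommSemiring R] (e p : σ → R) : MvPolynomial σ R →ₐ[R] Polynomial R :=
  aeval fun i => Polynomial.C (p i) + Polynomial.C (e i) * Polynomial.X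

@[simp]
lemma lineHom_X [CommSemiring R] (e p : σ → R) (i : σ) :
    lineHom e p (X i) = Polynomial.C (p i) + Polynomial.C (e i) * Polynomial.X :=
  aeval_X _ _

@[simp]
lemma eval_lineHom [CommSemiring R] (e p : σ → R) (h : MvPolynomial σ R) (t : R) :
    (lineHom e p h).eval t = eval (t • e + p) h := by
  induction h using MvPolynomial.induction_on with
  | C a => simp [lineHom]
  | add h₁ h₂ ih₁ ih₂ => simp [ih₁, ih₂]
  | mul_X h i ih => simp [ih, add_comm (p i), mul_comm (e i)]

lemma coeff_zero_lineHom [CommSemiring R] (e p : σ → R) (h : MvPolynomial σ R) :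
    (lineHom e p h).coeff 0 = eval p h := by
  rw [Polynomial.coeff_zero_eq_eval_zero, eval_lineHom, zero_smul, zero_add]

lemma coeff_one_lineHom [CommSemiring R] [Fintype σ] (e p : σ → R) (h : MvPolynomial σ R) :
    (lineHom e p h).coeff 1 = ∑ i, e i * eval p (pderiv i h) := by
  classical
  induction h using MvPolynomial.induction_on with
  | C a => simp [lineHom]
  | add h₁ h₂ ih₁ ih₂ => simp [ih₁, ih₂, mul_add, Finset.sum_add_distrib]
  | mul_X h j ih =>
    rw [map_mul, Polynomial.mul_coeff_one, ih, coeff_zero_lineHom, coeff_zero_lineHom]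
    simp only [pderiv_mul, pderiv_X, map_add, map_mul, eval_X, mul_add, Finset.sum_add_distrib,
      lineHom_X, Polynomial.coeff_add, Polynomial.coeff_C_mul, Polynomial.coeff_X_one,
      Polynomial.coeff_C_succ, zero_add, mul_one]
    rw [add_comm]
    congr 1
    · rw [Finset.sum_mul]
      exact Finset.sum_congr rfl fun i _ => mul_assoc _ _ _
    · rw [Finset.sum_eq_single j (fun i _ hij => by simp [Pi.single_eq_of_ne' hij]) (by simp)]
      simp [mul_comm]

lemma natDegree_lineHom_le [CommSemiring R] {m : ℕ} {h : MvPolynomial σ R}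
    (hh : h.IsHomogeneous m) (e p : σ → R) : (lineHom e p h).natDegree ≤ m := by
  have := aeval_natDegree_le h hh.totalDegree_le
    (fun i => Polynomial.C (p i) + Polynomial.C (e i) * Polynomial.X)
    (fun i => by compute_degree : ∀ i, _ ≤ 1)
  simpa only [mul_one, lineHom] using this

lemma degree_lineHom_lt [CommSemiring R] {m k : ℕ} {h : MvPolynomial σ R}
    (hh : h.IsHomogeneous m) (hmk : m < k) (e p : σ → R) : (lineHom e p h).degree < k :=
  (Polynomial.degree_le_of_natDegree_le (natDegree_lineHom_le hh e p)).trans_lt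
    (Nat.cast_lt.mpr hmk)

section Field

variable [Field K] [Infinite K] {m : ℕ} {h : MvPolynomial σ K}

lemma reflect_lineHom (hh : h.IsHomogeneous m) (e p : σ → K) :
    Polynomial.reflect m (lineHom e p h) = lineHom p e h := by
  refine Polynomial.eq_of_infinite_eval_eq _ _
    ((Set.finite_singleton (0 : K)).infinite_compl.mono fun s (hs : s ≠ 0) => ?_)
  let _ := invertibleOfNonzero (inv_ne_zero hs)
  have hreflect := Polynomial.eval₂_reflect_mul_pow (RingHom.id K) s⁻¹ m (lineHom e p h)
    (natDegree_lineHom_le hh e p)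
  have hscale : s⁻¹ • e + p = s⁻¹ • (s • p + e) := by
    rw [smul_add, inv_smul_smul₀ hs, add_comm]
  rw [invOf_eq_inv, inv_inv, Polynomial.eval₂_id, Polynomial.eval₂_id, eval_lineHom, hscale,
    eval_smul_of_isHomogeneous hh, mul_comm] at hreflect
  rw [Set.mem_ofPred_eq, eval_lineHom]
  exact mul_left_cancel₀ (pow_ne_zero _ (inv_ne_zero hs)) hreflect

lemma coeff_lineHom_eq_eval (hh : h.IsHomogeneous m) (e p : σ → K) :
    (lineHom e p h).coeff m = eval e h := by
  rw [← coeff_zero_lineHom p e, ← reflect_lineHom hh e p, Polynomial.coeff_reflect,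
    Polynomial.revAt_le m.zero_le, Nat.sub_zero]

lemma coeff_lineHom_eq_sum_pderiv [Fintype σ] (hh : h.IsHomogeneous (m + 1)) (e p : σ → K) :
    (lineHom e p h).coeff m = ∑ i, p i * eval e (pderiv i h) := by
  rw [← coeff_one_lineHom p e, ← reflect_lineHom hh e p, Polynomial.coeff_reflect,
    Polynomial.revAt_le (by omega), Nat.add_sub_cancel]

lemma natDegree_lineHom_eq (hh : h.IsHomogeneous m) {e : σ → K} (he : eval e h ≠ 0)
    (p : σ → K) : (lineHom e p h).natDegree = m :=
  le_antisymm (natDegree_lineHom_le hh e p)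
    (Polynomial.le_natDegree_of_ne_zero (by rwa [coeff_lineHom_eq_eval hh]))

lemma degree_lineHom_lt_of_eval_eq_zero (hh : h.IsHomogeneous m) {e : σ → K}
    (he : eval e h = 0) (p : σ → K) : (lineHom e p h).degree < m := by
  refine Polynomial.degree_lt_iff_coeff_zero _ _ |>.mpr fun k hk => ?_
  rcases hk.eq_or_lt with rfl | hlt
  · rwa [coeff_lineHom_eq_eval hh]
  · exact Polynomial.coeff_eq_zero_of_natDegree_lt ((natDegree_lineHom_le hh e p).trans_lt hlt)

lemma eval_eq_zero_of_lineHom_eq_zero (hh : h.IsHomogeneous m) {e p : σ → K}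
    (hline : lineHom e p h = 0) (t u : K) : eval (t • e + u • p) h = 0 := by
  by_cases hu : u = 0
  · rw [hu, zero_smul, add_zero, eval_smul_of_isHomogeneous hh, ← coeff_lineHom_eq_eval hh e p,
      hline, Polynomial.coeff_zero, mul_zero]
  · have hscale : t • e + u • p = u • ((u⁻¹ * t) • e + p) := by
      rw [smul_add, smul_smul, mul_inv_cancel_left₀ hu]
    rw [hscale, eval_smul_of_isHomogeneous hh, ← eval_lineHom, hline, Polynomial.eval_zero,
      mul_zero]

end Field

lemma dvd_sub_aeval_of_forall_dvd_X_sub [CommRing R] {ℓ : MvPolynomial σ R}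
    {g : σ → MvPolynomial σ R} (hg : ∀ i, ℓ ∣ X i - g i) (h : MvPolynomial σ R) :
    ℓ ∣ h - aeval g h := by
  have hmk : Ideal.Quotient.mkₐ R (Ideal.span {ℓ}) =
      (Ideal.Quotient.mkₐ R (Ideal.span {ℓ})).comp (aeval g) := by
    refine algHom_ext fun i => ?_
    simpa [Ideal.Quotient.mk_eq_mk_iff_sub_mem, Ideal.mem_span_singleton] using hg i
  rw [← Ideal.mem_span_singleton, ← Ideal.Quotient.mk_eq_mk_iff_sub_mem]
  exact DFunLike.congr_fun hmk h

section Plane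

variable [Field K]

lemma eq_add_of_coord_eq_zero (B : Module.Basis (Fin 3) K (Fin 3 → K)) {x : Fin 3 → K}
    (hx : B.coord 2 x = 0) : x = B.coord 0 x • B 0 + B.coord 1 x • B 1 := by
  have hsum := B.sum_repr x
  rw [Fin.sum_univ_three, ← B.coord_apply 2, hx, zero_smul, add_zero] at hsum
  exact hsum.symm

variable [Infinite K]

lemma lineHom_linearForm [Fintype σ] [DecidableEq σ] (e p : σ → K) (φ : (σ → K) →ₗ[K] K) :
    lineHom e p (linearForm φ) = Polynomial.C (φ p) + Polynomial.C (φ e) * Polynomial.X := by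
  refine Polynomial.funext fun t => ?_
  simp [add_comm (φ p), mul_comm (φ e)]

variable (B : Module.Basis (Fin 3) K (Fin 3 → K))

lemma X_eq_sum_linearForm_coord (i : Fin 3) :
    (X i : MvPolynomial (Fin 3) K) = ∑ k, C (B k i) * linearForm (B.coord k) := by
  refine MvPolynomial.funext fun x => ?_
  conv_lhs => rw [eval_X, ← B.sum_repr x]
  simp [mul_comm]

variable {m k : ℕ} {h : MvPolynomial (Fin 3) K}

lemma linearForm_coord_dvd_of_lineHom_eq_zero (hh : h.IsHomogeneous m)
    (hline : lineHom (B 0) (B 1) h = 0) : linearForm (B.coord 2) ∣ h := by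
  let g (i : Fin 3) : MvPolynomial (Fin 3) K :=
    C (B 0 i) * linearForm (B.coord 0) + C (B 1 i) * linearForm (B.coord 1)
  have hX (i : Fin 3) : linearForm (B.coord 2) ∣ X i - g i := by
    refine ⟨C (B 2 i), ?_⟩
    rw [X_eq_sum_linearForm_coord B i, Fin.sum_univ_three]
    ring
  have hproj : aeval g h = 0 := by
    refine MvPolynomial.funext fun x => ?_
    have heval : eval x (aeval g h) = eval (B.coord 0 x • B 0 + B.coord 1 x • B 1) h := by
      rw [← coe_aeval_eq_eval, ← coe_aeval_eq_eval, RingHom.coe_coe, RingHom.coe_coe,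
        comp_aeval_apply]
      congr 2
      ext i
      simp [g, aeval_eq_eval, mul_comm]
    rw [heval, eval_eq_zero_of_lineHom_eq_zero hh hline, map_zero]
  simpa only [hproj, sub_zero] using dvd_sub_aeval_of_forall_dvd_X_sub hX h

lemma exists_eq_linearForm_coord_mul (hh : h.IsHomogeneous (k + 1))
    (hline : lineHom (B 0) (B 1) h = 0) :
    ∃ h', h'.IsHomogeneous k ∧ h = linearForm (B.coord 2) * h' :=
  exists_isHomogeneous_eq_mul_of_dvd (isHomogeneous_linearForm _) (add_comm k 1 ▸ hh)
    (linearForm_coord_dvd_of_lineHom_eq_zero B hh hline)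

lemma lineHom_linearForm_coord_mul (h : MvPolynomial (Fin 3) K) :
    lineHom (B 0) (B 1) (linearForm (B.coord 2) * h) = 0 := by
  simp [lineHom_linearForm]

lemma exists_isHomogeneous_lineHom_eq {q : Polynomial K} (hq : q.natDegree ≤ k) :
    ∃ h, h.IsHomogeneous k ∧ lineHom (B 0) (B 1) h = q := by
  refine ⟨∑ i ∈ Finset.range (k + 1),
    C (q.coeff i) * (linearForm (B.coord 0) ^ i * linearForm (B.coord 1) ^ (k - i)), ?_, ?_⟩
  · refine IsHomogeneous.sum _ _ _ fun i hi => (IsHomogeneous.C_mul ?_ _)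
    have := ((isHomogeneous_linearForm (B.coord 0)).pow i).mul
      ((isHomogeneous_linearForm (B.coord 1)).pow (k - i))
    rwa [one_mul, one_mul, Nat.add_sub_cancel' (Nat.lt_succ_iff.mp (Finset.mem_range.mp hi))]
      at this
  · conv_rhs => rw [q.as_sum_range' (k + 1) (Nat.lt_succ_of_le hq)]
    simp [lineHom_linearForm, ← Polynomial.C_mul_X_pow_eq_monomial, algHom_C]

end Plane

end Lines

section CoprimeOnLine

open MvPolynomial

variable {K : Type*} [Field K]

lemma exists_eq_mul_add_mul_of_isCoprime {a b q : Polynomial K} {m n j : ℕ}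
    (hab : IsCoprime a b) (ha : a.natDegree = m + 1) (hb : b.natDegree ≤ n)
    (hq : q.natDegree ≤ m + 1 + n + j) :
    ∃ α β : Polynomial K, α.natDegree ≤ n + j ∧ β.natDegree ≤ m ∧ q = α * a + β * b := by
  obtain ⟨u, v, huv⟩ := hab
  have hdivmod := EuclideanDomain.div_add_mod (q * v) a
  set β := q * v % a
  set α := q * u + q * v / a * b
  have hsum : q = α * a + β * b := by linear_combination (-q) * huv - b * hdivmod
  have hβ : β.natDegree ≤ m :=
    Nat.lt_succ_iff.mp ((Polynomial.natDegree_mod_lt (q * v) (by omega)).trans_eq ha)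
  refine ⟨α, β, ?_, hβ, hsum⟩
  by_cases hα : α = 0
  · simp [hα]
  have hαa : (α * a).natDegree ≤ m + 1 + n + j := by
    rw [eq_sub_of_add_eq hsum.symm]
    exact (Polynomial.natDegree_sub_le_of_le hq (Polynomial.natDegree_mul_le_of_le hβ hb)).trans
      (max_le le_rfl (by omega))
  rw [Polynomial.natDegree_mul hα (Polynomial.ne_zero_of_natDegree_gt (n := m) (by omega)), ha]
    at hαa
  omega

/-- The curves `F = 0` and `G = 0` have no common point on the projective line through `e` and
`p`, expressed by coprimality of the two restrictions; `e`, which is the point at infinity of the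
affine line `t ↦ t • e + p`, is required to be off the first curve. -/
structure CoprimeOnLine (e p : Fin 3 → K) (F G : MvPolynomial (Fin 3) K) : Prop where
  eval_ne_zero : eval e F ≠ 0
  isCoprime : IsCoprime (lineHom e p F) (lineHom e p G)

namespace CoprimeOnLine

variable {B : Module.Basis (Fin 3) K (Fin 3 → K)} {F G : MvPolynomial (Fin 3) K} {m n : ℕ}

lemma coord_ne_zero_of_common_zero (hFG : CoprimeOnLine (B 0) (B 1) F G)
    (hF : F.IsHomogeneous m) (hG : G.IsHomogeneous n) {x : Fin 3 → K} (hx : x ≠ 0)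
    (hFx : eval x F = 0) (hGx : eval x G = 0) : B.coord 2 x ≠ 0 := by
  intro hcoord
  have hxB := eq_add_of_coord_eq_zero B hcoord
  by_cases hu : B.coord 1 x = 0
  · rw [hu, zero_smul, add_zero] at hxB
    have ht : B.coord 0 x ≠ 0 := fun ht => hx (by rw [hxB, ht, zero_smul])
    rw [hxB, eval_smul_of_isHomogeneous hF] at hFx
    exact mul_ne_zero (pow_ne_zero _ ht) hFG.eval_ne_zero hFx
  · set t := (B.coord 1 x)⁻¹ * B.coord 0 x with ht
    have hscale : x = B.coord 1 x • (t • B 0 + B 1) := by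
      rw [ht, smul_add, smul_smul, mul_inv_cancel_left₀ hu, ← hxB]
    have root_of_eval_eq_zero {k : ℕ} {h : MvPolynomial (Fin 3) K} (hh : h.IsHomogeneous k)
        (hhx : eval x h = 0) : (lineHom (B 0) (B 1) h).eval t = 0 := by
      rw [hscale, eval_smul_of_isHomogeneous hh] at hhx
      rw [eval_lineHom]
      exact (mul_eq_zero.mp hhx).resolve_left (pow_ne_zero _ hu)
    obtain ⟨α, β, hαβ⟩ := hFG.isCoprime
    simpa [root_of_eval_eq_zero hF hFx, root_of_eval_eq_zero hG hGx, -eval_lineHom] using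
      congrArg (Polynomial.eval t) hαβ

variable [Infinite K]

lemma lineHom_ne_zero (hFG : CoprimeOnLine (B 0) (B 1) F G) (hF : F.IsHomogeneous m) :
    lineHom (B 0) (B 1) F ≠ 0 := by
  intro hline
  apply hFG.eval_ne_zero
  rw [← coeff_lineHom_eq_eval hF _ (B 1), hline, Polynomial.coeff_zero]

lemma exists_eq_add_linearForm_mul (hFG : CoprimeOnLine (B 0) (B 1) F G)
    (hF : F.IsHomogeneous (m + 1)) (hG : G.IsHomogeneous n) {j : ℕ} {y : MvPolynomial (Fin 3) K}
    (hy : y.IsHomogeneous (m + 1 + n + j)) :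
    ∃ α β y', y'.IsHomogeneous (m + n + j) ∧
      y = α * F + β * G + linearForm (B.coord 2) * y' := by
  -- Bézout on the line through `B 0` and `B 1`: the rest vanishes there.
  obtain ⟨α₀, β₀, hα₀, hβ₀, hline⟩ := exists_eq_mul_add_mul_of_isCoprime hFG.isCoprime
    (natDegree_lineHom_eq hF hFG.eval_ne_zero (B 1)) (natDegree_lineHom_le hG _ _)
    (natDegree_lineHom_le hy (B 0) (B 1))
  obtain ⟨α, hα, rfl⟩ := exists_isHomogeneous_lineHom_eq B hα₀
  obtain ⟨β, hβ, rfl⟩ := exists_isHomogeneous_lineHom_eq B (hβ₀.trans (by omega : m ≤ m + 1 + j))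
  have hrest : (y - α * F - β * G).IsHomogeneous (m + n + j + 1) := by
    have hαF := hα.mul hF
    have hβG := hβ.mul hG
    rw [show n + j + (m + 1) = m + n + j + 1 by ring] at hαF
    rw [show m + 1 + j + n = m + n + j + 1 by ring] at hβG
    rw [show m + 1 + n + j = m + n + j + 1 by ring] at hy
    exact (hy.sub hαF).sub hβG
  obtain ⟨y', hy', hrest_eq⟩ := exists_eq_linearForm_coord_mul B hrest (by simp [hline])
  exact ⟨α, β, y', hy', by linear_combination hrest_eq⟩

lemma lineHom_eq_zero_of_dvd_mul (hFG : CoprimeOnLine (B 0) (B 1) F G) (hF : F.IsHomogeneous m)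
    {b : MvPolynomial (Fin 3) K} (hdeg : (lineHom (B 0) (B 1) b).degree < m) (hdvd : F ∣ G * b) :
    lineHom (B 0) (B 1) b = 0 := by
  refine Polynomial.eq_zero_of_dvd_of_degree_lt (hFG.isCoprime.dvd_of_dvd_mul_left ?_) ?_
  · rw [← map_mul]
    exact map_dvd _ hdvd
  · rwa [Polynomial.degree_eq_natDegree (hFG.lineHom_ne_zero hF),
      natDegree_lineHom_eq hF hFG.eval_ne_zero]

lemma exists_eq_linearForm_mul_of_dvd_mul (hFG : CoprimeOnLine (B 0) (B 1) F G)
    (hF : F.IsHomogeneous m) {k : ℕ} {b : MvPolynomial (Fin 3) K}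
    (hb : b.IsHomogeneous (k + 1)) (hdeg : (lineHom (B 0) (B 1) b).degree < m)
    (hdvd : F ∣ G * b) :
    ∃ b', b'.IsHomogeneous k ∧ b = linearForm (B.coord 2) * b' ∧ F ∣ G * b' := by
  obtain ⟨b', hb', rfl⟩ := exists_eq_linearForm_coord_mul B hb
    (hFG.lineHom_eq_zero_of_dvd_mul hF hdeg hdvd)
  obtain ⟨c, hc⟩ := hdvd
  have hprime : Prime (linearForm (B.coord 2)) := prime_linearForm fun hzero => by
    simpa using DFunLike.congr_fun hzero (B 2)
  have hndvd : ¬ linearForm (B.coord 2) ∣ F := by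
    rintro ⟨F', rfl⟩
    exact hFG.lineHom_ne_zero hF (lineHom_linearForm_coord_mul B F')
  obtain ⟨c', rfl⟩ := (hprime.dvd_or_dvd (⟨G * b', by rw [← hc]; ring⟩ :
    linearForm (B.coord 2) ∣ F * c)).resolve_left hndvd
  exact ⟨b', hb', rfl, c', mul_left_cancel₀ hprime.ne_zero (by linear_combination hc)⟩

lemma eq_zero_of_dvd_mul (hFG : CoprimeOnLine (B 0) (B 1) F G) (hF : F.IsHomogeneous m)
    {k : ℕ} (hk : k < m) {b : MvPolynomial (Fin 3) K} (hb : b.IsHomogeneous k)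
    (hdvd : F ∣ G * b) : b = 0 := by
  induction k generalizing b with
  | zero =>
    have hline := hFG.lineHom_eq_zero_of_dvd_mul hF (degree_lineHom_lt hb hk _ _) hdvd
    rw [totalDegree_eq_zero_iff_eq_C.mp ((totalDegree_zero_iff_isHomogeneous _).mpr hb)] at hline ⊢
    simpa [algHom_C] using hline
  | succ k ih =>
    obtain ⟨b', hb', rfl, hdvd'⟩ :=
      hFG.exists_eq_linearForm_mul_of_dvd_mul hF hb (degree_lineHom_lt hb hk _ _) hdvd
    rw [ih (by omega) hb' hdvd', mul_zero]

lemma C_mul_eq_C_mul_of_dvd_mul (hFG : CoprimeOnLine (B 0) (B 1) F G)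
    (hF : F.IsHomogeneous (m + 1)) {h : MvPolynomial (Fin 3) K} (hh : h.IsHomogeneous (m + 1))
    (hdvd : F ∣ G * h) : C (eval (B 0) F) * h = C (eval (B 0) h) * F := by
  set b := C (eval (B 0) F) * h - C (eval (B 0) h) * F with hb_def
  have hb : b.IsHomogeneous (m + 1) := (hh.C_mul _).sub (hF.C_mul _)
  have hb_eval : eval (B 0) b = 0 := by simp [hb_def, mul_comm]
  have hdvd_b : F ∣ G * b := by
    have hexpand : G * b = C (eval (B 0) F) * (G * h) - F * (G * C (eval (B 0) h)) := by ring
    rw [hexpand]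
    exact dvd_sub (hdvd.mul_left _) (dvd_mul_right _ _)
  obtain ⟨b', hb', hb_eq, hdvd'⟩ := hFG.exists_eq_linearForm_mul_of_dvd_mul hF hb
    (degree_lineHom_lt_of_eval_eq_zero hb hb_eval _) hdvd_b
  rw [← sub_eq_zero, ← hb_def, hb_eq, hFG.eq_zero_of_dvd_mul hF (by omega) hb' hdvd', mul_zero]

end CoprimeOnLine

end CoprimeOnLine

section IndependentConditions

open MvPolynomial

variable {σ K : Type*} [Field K]

/-- Evaluation of forms of degree `k` at the points of `Z`. -/
noncomputable def formEval (k : ℕ) (Z : Finset (σ → K)) :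
    homogeneousSubmodule σ K k →ₗ[K] (Z → K) :=
  LinearMap.pi fun z => (aeval (z : σ → K)).toLinearMap ∘ₗ (homogeneousSubmodule σ K k).subtype

@[simp]
lemma formEval_apply {k : ℕ} {Z : Finset (σ → K)} (h : homogeneousSubmodule σ K k) (z : Z) :
    formEval k Z h z = eval (z : σ → K) (h : MvPolynomial σ K) := by
  simp [formEval, aeval_eq_eval]

lemma mem_ker_formEval {k : ℕ} {Z : Finset (σ → K)} {h : homogeneousSubmodule σ K k} :
    h ∈ LinearMap.ker (formEval k Z) ↔ ∀ z ∈ Z, eval z (h : MvPolynomial σ K) = 0 := by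
  simp [LinearMap.mem_ker, funext_iff]

lemma surjective_formEval_of_separating {k : ℕ} {Z : Finset (σ → K)}
    (hsep : ∀ z ∈ Z, ∃ h : MvPolynomial σ K, h.IsHomogeneous k ∧ eval z h ≠ 0 ∧
      ∀ w ∈ Z, w ≠ z → eval w h = 0) :
    Function.Surjective (formEval k Z) := by
  classical
  rw [← LinearMap.range_eq_top, eq_top_iff, ← (Pi.basisFun K Z).span_eq, Submodule.span_le]
  rintro _ ⟨z, rfl⟩
  obtain ⟨h, hh, hz, hvanish⟩ := hsep z z.2
  refine ⟨(eval (z : σ → K) h)⁻¹ • ⟨h, hh⟩, ?_⟩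
  ext w
  rw [map_smul, Pi.smul_apply, formEval_apply, Pi.basisFun_apply]
  by_cases hwz : w = z
  · simp [hwz, hz]
  · simp [hvanish w w.2 (fun heq => hwz (Subtype.ext heq)), hwz]

instance finite_homogeneousSubmodule [Finite σ] (k : ℕ) :
    Module.Finite K (homogeneousSubmodule σ K k) :=
  Module.Finite.iff_fg.mpr (homogeneousSubmodule_fg σ K k)

lemma finrank_homogeneousSubmodule_le_card_add_card [Finite σ] {ι : Type*} [Fintype ι] {k : ℕ}
    {Z : Finset (σ → K)} {a : ι → MvPolynomial σ K}
    (hspan : ∀ h : MvPolynomial σ K, h.IsHomogeneous k → (∀ z ∈ Z, eval z h = 0) →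
      h ∈ Submodule.span K (Set.range a)) :
    Module.finrank K (homogeneousSubmodule σ K k) ≤ Z.card + Fintype.card ι := by
  have hker : Module.finrank K (LinearMap.ker (formEval k Z)) ≤ Fintype.card ι := by
    rw [← Submodule.finrank_map_subtype_eq]
    have := Module.Finite.span_of_finite K (Set.finite_range a)
    refine (Submodule.finrank_mono (t := Submodule.span K (Set.range a)) ?_).trans
      (finrank_range_le_card a)
    rintro _ ⟨h, hh, rfl⟩
    exact hspan h h.2 (mem_ker_formEval.mp hh)
  have hrange : Module.finrank K (LinearMap.range (formEval k Z)) ≤ Z.card := by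
    simpa using Submodule.finrank_le (LinearMap.range (formEval k Z))
  rw [← LinearMap.finrank_range_add_finrank_ker (formEval k Z)]
  exact add_le_add hrange hker

lemma exists_isHomogeneous_separating [Finite σ] (Z : Finset (σ → K)) {z : σ → K}
    (hz : ∀ w ∈ Z, ∀ c : K, z ≠ c • w) :
    ∃ h : MvPolynomial σ K, h.IsHomogeneous Z.card ∧ eval z h ≠ 0 ∧ ∀ w ∈ Z, eval w h = 0 := by
  classical
  have := Fintype.ofFinite σ
  have hspan (w : Z) : z ∉ Submodule.span K {(w : σ → K)} := fun hmem => by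
    obtain ⟨c, hc⟩ := Submodule.mem_span_singleton.mp hmem
    exact hz w w.2 c hc.symm
  choose φ hφz hφw using fun w : Z => Submodule.exists_le_ker_of_notMem (hspan w)
  refine ⟨∏ w, linearForm (φ w), ?_, ?_, fun w hw => ?_⟩
  · simpa using IsHomogeneous.prod Finset.univ (fun w => linearForm (φ w)) (fun _ => 1)
      fun w _ => isHomogeneous_linearForm (φ w)
  · simpa [map_prod, Finset.prod_ne_zero_iff] using fun w hw => hφz ⟨w, hw⟩
  · rw [map_prod]
    refine Finset.prod_eq_zero (Finset.mem_univ ⟨w, hw⟩) ?_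
    rw [eval_linearForm]
    exact hφw ⟨w, hw⟩ (Submodule.mem_span_singleton_self w)

lemma exists_finset_subset_two_mul_card_eq {S : Set (Fin 3 → K)} {n : ℕ}
    {a : Fin (n + 1) → MvPolynomial (Fin 3) K}
    (hspan : ∀ h : MvPolynomial (Fin 3) K, h.IsHomogeneous n → (∀ s ∈ S, eval s h = 0) →
      h ∈ Submodule.span K (Set.range a)) :
    ∃ S₀ : Finset (Fin 3 → K), (S₀ : Set (Fin 3 → K)) ⊆ S ∧ 2 * S₀.card = (n + 1) * n := by
  have hhalf : 2 * ((n + 1) * n / 2) = (n + 1) * n :=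
    Nat.mul_div_cancel' (mul_comm n (n + 1) ▸ (Nat.even_mul_succ_self n).two_dvd)
  rcases S.finite_or_infinite with hfin | hinf
  · lift S to Finset (Fin 3 → K) using hfin
    have hcard := finrank_homogeneousSubmodule_le_card_add_card hspan
    have hdim := two_mul_finrank_homogeneousSubmodule_fin_three (R := K) n
    rw [Fintype.card_fin] at hcard
    obtain ⟨S₀, hsub, hS₀⟩ := Finset.exists_subset_card_eq
      (show (n + 1) * n / 2 ≤ S.card by nlinarith)
    exact ⟨S₀, Finset.coe_subset.mpr hsub, by omega⟩
  · obtain ⟨S₀, hsub, hS₀⟩ := hinf.exists_subset_card_eq ((n + 1) * n / 2)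
    exact ⟨S₀, hsub, by omega⟩

end IndependentConditions

section NoetherFundamentalTheorem

open MvPolynomial

variable {K : Type*} [Field K]

/-- The vectors in `Z` are common zeros of `F` and `G` representing pairwise distinct points of
projective space. -/
structure IsCommonZeroSet {σ : Type*} (F G : MvPolynomial σ K) (Z : Finset (σ → K)) : Prop where
  ne_zero : ∀ z ∈ Z, z ≠ 0
  eval_left : ∀ z ∈ Z, eval z F = 0
  eval_right : ∀ z ∈ Z, eval z G = 0
  ne_smul : ∀ z ∈ Z, ∀ w ∈ Z, w ≠ z → ∀ c : K, z ≠ c • w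

/-- The map `(α, β) ↦ F * α + G * β` on pairs of forms of degrees `k` and `l`. -/
noncomputable def formCombination {σ : Type*} (F G : MvPolynomial σ K) (k l : ℕ) :
    homogeneousSubmodule σ K k × homogeneousSubmodule σ K l →ₗ[K] MvPolynomial σ K :=
  (LinearMap.mulLeft K F ∘ₗ Submodule.subtype _).coprod
    (LinearMap.mulLeft K G ∘ₗ Submodule.subtype _)

lemma formCombination_apply {σ : Type*} (F G : MvPolynomial σ K) {k l : ℕ}
    (α : homogeneousSubmodule σ K k) (β : homogeneousSubmodule σ K l) :
    formCombination F G k l (α, β) = F * α + G * β :=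
  rfl

namespace CoprimeOnLine

variable [Infinite K] {B : Module.Basis (Fin 3) K (Fin 3 → K)} {F G : MvPolynomial (Fin 3) K}
  {m n : ℕ} {Z : Finset (Fin 3 → K)}

lemma exists_separating_of_degree_add (hFG : CoprimeOnLine (B 0) (B 1) F G)
    (hF : F.IsHomogeneous (m + 1)) (hG : G.IsHomogeneous n) (hZ : IsCommonZeroSet F G Z)
    {z : Fin 3 → K} (hz : z ∈ Z) {j : ℕ} {h : MvPolynomial (Fin 3) K}
    (hh : h.IsHomogeneous (m + n + j)) (hhz : eval z h ≠ 0)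
    (hvanish : ∀ w ∈ Z, w ≠ z → eval w h = 0) :
    ∃ h : MvPolynomial (Fin 3) K, h.IsHomogeneous (m + n) ∧ eval z h ≠ 0 ∧
      ∀ w ∈ Z, w ≠ z → eval w h = 0 := by
  induction j generalizing h with
  | zero => exact ⟨h, hh, hhz, hvanish⟩
  | succ j ih =>
    rw [show m + n + (j + 1) = m + 1 + n + j by ring] at hh
    obtain ⟨α, β, h', hh', rfl⟩ := hFG.exists_eq_add_linearForm_mul hF hG hh
    have heval {w : Fin 3 → K} (hw : w ∈ Z) :
        eval w (α * F + β * G + linearForm (B.coord 2) * h') = B.coord 2 w * eval w h' := by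
      rw [map_add, map_add, map_mul, map_mul, map_mul, hZ.eval_left w hw, hZ.eval_right w hw,
        eval_linearForm, mul_zero, mul_zero, zero_add, zero_add]
    rw [heval hz] at hhz
    refine ih hh' (right_ne_zero_of_mul hhz) fun w hw hwz => ?_
    have hw_eval := hvanish w hw hwz
    rw [heval hw] at hw_eval
    exact (mul_eq_zero.mp hw_eval).resolve_left (hFG.coord_ne_zero_of_common_zero hF hG
      (hZ.ne_zero w hw) (hZ.eval_left w hw) (hZ.eval_right w hw))

lemma surjective_formEval (hFG : CoprimeOnLine (B 0) (B 1) F G)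
    (hF : F.IsHomogeneous (m + 1)) (hG : G.IsHomogeneous n) (hZ : IsCommonZeroSet F G Z) :
    Function.Surjective (formEval (m + n) Z) := by
  classical
  refine surjective_formEval_of_separating fun z hz => ?_
  obtain ⟨h, hh, hhz, hvanish⟩ := exists_isHomogeneous_separating (Z.erase z) (z := z)
    fun w hw => hZ.ne_smul z hz w (Finset.mem_of_mem_erase hw) (Finset.ne_of_mem_erase hw)
  have hcoord := hFG.coord_ne_zero_of_common_zero hF hG (hZ.ne_zero z hz) (hZ.eval_left z hz)
    (hZ.eval_right z hz)
  have hpow := (isHomogeneous_linearForm (B.coord 2)).pow (m + n)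
  rw [one_mul] at hpow
  refine hFG.exists_separating_of_degree_add hF hG hZ hz (hpow.mul hh) ?_ fun w hw hwz => ?_
  · rw [map_mul, map_pow, eval_linearForm]
    exact mul_ne_zero (pow_ne_zero _ hcoord) hhz
  · rw [map_mul, hvanish w (Finset.mem_erase.mpr ⟨hwz, hw⟩), mul_zero]

lemma two_mul_finrank_ker_formEval (hFG : CoprimeOnLine (B 0) (B 1) F G)
    (hF : F.IsHomogeneous (m + 1)) (hG : G.IsHomogeneous n) (hZ : IsCommonZeroSet F G Z) :
    2 * Z.card + 2 * Module.finrank K (LinearMap.ker (formEval (m + n) Z)) =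
      (m + n + 1) * (m + n + 2) := by
  have hrank := LinearMap.finrank_range_add_finrank_ker (formEval (m + n) Z)
  rw [LinearMap.range_eq_top.mpr (hFG.surjective_formEval hF hG hZ), finrank_top,
    Module.finrank_fintype_fun_eq_card, Fintype.card_coe] at hrank
  rw [← mul_add, hrank, two_mul_finrank_homogeneousSubmodule_fin_three]

lemma injective_formCombination (hFG : CoprimeOnLine (B 0) (B 1) F G)
    (hF : F.IsHomogeneous (m + 1)) (k : ℕ) : Function.Injective (formCombination F G k m) := by
  rw [injective_iff_map_eq_zero]
  rintro ⟨α, β⟩ hαβ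
  rw [formCombination_apply] at hαβ
  have hβ : (β : MvPolynomial (Fin 3) K) = 0 := hFG.eq_zero_of_dvd_mul hF m.lt_succ_self β.2
    ⟨-α, by linear_combination hαβ⟩
  have hF0 : F ≠ 0 := fun hF0 => hFG.eval_ne_zero (by rw [hF0, map_zero])
  rw [hβ, mul_zero, add_zero, mul_eq_zero, or_iff_right hF0] at hαβ
  exact Prod.ext (Subtype.ext hαβ) (Subtype.ext hβ)

lemma range_formCombination (hFG : CoprimeOnLine (B 0) (B 1) F G) (hF : F.IsHomogeneous (m + 1))
    (hG : G.IsHomogeneous (n + 1)) (hZ : IsCommonZeroSet F G Z)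
    (hcard : Z.card = (m + 1) * (n + 1)) :
    LinearMap.range (formCombination F G n m) =
      (LinearMap.ker (formEval (m + (n + 1)) Z)).map (Submodule.subtype _) := by
  refine Submodule.eq_of_le_of_finrank_le ?_ ?_
  · rintro _ ⟨⟨⟨α, hα⟩, ⟨β, hβ⟩⟩, rfl⟩
    have hFα : (F * α).IsHomogeneous (m + 1 + n) := hF.mul hα
    have hGβ : (G * β).IsHomogeneous (n + 1 + m) := hG.mul hβ
    rw [show m + 1 + n = m + (n + 1) by ring] at hFα
    rw [show n + 1 + m = m + (n + 1) by ring] at hGβ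
    refine ⟨⟨F * α + G * β, hFα.add hGβ⟩, ?_, rfl⟩
    rw [SetLike.mem_coe, mem_ker_formEval]
    intro z hz
    simp [hZ.eval_left z hz, hZ.eval_right z hz]
  · -- Both sides have dimension `(m + 1) * (m + 2) / 2 + (n + 1) * (n + 2) / 2`.
    rw [Submodule.finrank_map_subtype_eq,
      LinearMap.finrank_range_of_inj (hFG.injective_formCombination hF n), Module.finrank_prod]
    have hker := hFG.two_mul_finrank_ker_formEval hF hG hZ
    have hn := two_mul_finrank_homogeneousSubmodule_fin_three (R := K) n
    have hm := two_mul_finrank_homogeneousSubmodule_fin_three (R := K) m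
    rw [hcard] at hker
    nlinarith

theorem exists_dvd_sub_mul_of_forall_eval_eq_zero (hFG : CoprimeOnLine (B 0) (B 1) F G)
    (hF : F.IsHomogeneous (m + 1)) (hG : G.IsHomogeneous n) (hZ : IsCommonZeroSet F G Z)
    (hcard : Z.card = (m + 1) * n) {h : MvPolynomial (Fin 3) K} (hh : h.IsHomogeneous (m + n))
    (hvanish : ∀ z ∈ Z, eval z h = 0) :
    ∃ β : MvPolynomial (Fin 3) K, β.IsHomogeneous m ∧ F ∣ h - G * β := by
  cases n with
  | zero =>
    obtain ⟨c, rfl⟩ : ∃ c, G = C c :=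
      ⟨_, totalDegree_eq_zero_iff_eq_C.mp ((totalDegree_zero_iff_isHomogeneous _).mpr hG)⟩
    have hc : c ≠ 0 := by
      rintro rfl
      have hunit : IsUnit (lineHom (B 0) (B 1) F) :=
        isCoprime_zero_right.mp (by simpa using hFG.isCoprime)
      have hdeg := natDegree_lineHom_eq hF hFG.eval_ne_zero (B 1)
      rw [Polynomial.natDegree_eq_zero_of_isUnit hunit] at hdeg
      omega
    refine ⟨C c⁻¹ * h, hh.C_mul _, ?_⟩
    rw [← mul_assoc, ← C_mul, mul_inv_cancel₀ hc, C_1, one_mul, sub_self]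
    exact dvd_zero F
  | succ n =>
    have hmem : h ∈ LinearMap.range (formCombination F G n m) := by
      rw [hFG.range_formCombination hF hG hZ hcard]
      exact ⟨⟨h, hh⟩, mem_ker_formEval.mpr hvanish, rfl⟩
    obtain ⟨⟨α, β⟩, rfl⟩ := hmem
    exact ⟨β, β.2, α, by rw [formCombination_apply]; ring⟩

end CoprimeOnLine

end NoetherFundamentalTheorem

section Conjugation

open MvPolynomial ComplexConjugate

/-- A point of `ℝ³`, regarded as a point of `ℂ³`. -/
def realPt (x : Fin 3 → ℝ) : Fin 3 → ℂ := fun i => (x i : ℂ)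

lemma injective_realPt : Function.Injective realPt :=
  fun _ _ hxy => funext fun i => Complex.ofReal_injective (congrFun hxy i)

lemma realPt_smul_add (t : ℝ) (e p : Fin 3 → ℝ) :
    realPt (t • e + p) = (t : ℂ) • realPt e + realPt p := by
  ext i
  simp [realPt]

lemma conjPt_realPt (x : Fin 3 → ℝ) : conjPt (realPt x) = realPt x :=
  funext fun i => Complex.conj_ofReal (x i)

@[simp]
lemma conjPt_conjPt (x : Fin 3 → ℂ) : conjPt (conjPt x) = x :=
  funext fun i => Complex.conj_conj (x i)

lemma conjPt_smul (c : ℂ) (x : Fin 3 → ℂ) : conjPt (c • x) = conj c • conjPt x :=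
  funext fun i => map_mul conj c (x i)

lemma injective_conjPt : Function.Injective conjPt :=
  Function.LeftInverse.injective conjPt_conjPt

lemma eval_conjPt_map_conj (h : MvPolynomial (Fin 3) ℂ) (x : Fin 3 → ℂ) :
    eval (conjPt x) (map conj h) = conj (eval x h) :=
  (map_eval conj x h).symm

lemma eval_realPt_map_conj (h : MvPolynomial (Fin 3) ℂ) (x : Fin 3 → ℝ) :
    eval (realPt x) (map conj h) = conj (eval (realPt x) h) := by
  rw [← eval_conjPt_map_conj, conjPt_realPt]

lemma map_conj_map_conj (h : MvPolynomial (Fin 3) ℂ) : map conj (map conj h) = h := by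
  rw [map_map, show (starRingEnd ℂ).comp conj = RingHom.id ℂ by ext; simp, map_id]

lemma map_conj_complexify (h : MvPolynomial (Fin 3) ℝ) :
    map conj (complexify h) = complexify h := by
  rw [complexify, map_map, show (starRingEnd ℂ).comp (algebraMap ℝ ℂ) = algebraMap ℝ ℂ by ext; simp]

lemma eval_realPt_complexify (h : MvPolynomial (Fin 3) ℝ) (x : Fin 3 → ℝ) :
    eval (realPt x) (complexify h) = (eval x h : ℂ) :=
  (map_eval (algebraMap ℝ ℂ) x h).symm

lemma lineHom_complexify (h : MvPolynomial (Fin 3) ℝ) (e p : Fin 3 → ℝ) :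
    lineHom (realPt e) (realPt p) (complexify h) =
      (restrictLine h e p).map (algebraMap ℝ ℂ) := by
  induction h using MvPolynomial.induction_on with
  | C a => simp [complexify, restrictLine, algHom_C]
  | add h₁ h₂ ih₁ ih₂ => simp_all [complexify, restrictLine]
  | mul_X h i ih => simp_all [complexify, restrictLine, realPt]

lemma eq_zero_of_forall_eval_realPt_eq_zero {h : MvPolynomial (Fin 3) ℂ}
    (hh : ∀ x, eval (realPt x) h = 0) : h = 0 := by
  refine funext_set (fun _ => Set.range ((↑) : ℝ → ℂ))
    (fun _ => Set.infinite_range_of_injective Complex.ofReal_injective) fun x hx => ?_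
  choose y hy using fun i => hx i (Set.mem_univ i)
  rw [map_zero, ← hh y]
  exact congrArg (eval · h) (funext fun i => (hy i).symm)

/-- `S` contains one point from each complex conjugate pair of points of the intersection of the
plane curves `F = 0` and `G = 0`, points being represented by nonzero vectors. -/
structure IsConjugateSplitting (F G : MvPolynomial (Fin 3) ℂ) (S : Set (Fin 3 → ℂ)) : Prop where
  isCommonZero : ∀ s ∈ S, s ≠ 0 ∧ eval s F = 0 ∧ eval s G = 0
  existsUnique : ∀ x : Fin 3 → ℂ, x ≠ 0 → eval x F = 0 → eval x G = 0 →
    ∃! s, s ∈ S ∪ conjPt '' S ∧ ∃ c : ℂ, c ≠ 0 ∧ x = c • s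
  ne_smul_conjPt : ∀ s ∈ S, ∀ s' ∈ S, ∀ c : ℂ, c ≠ 0 → s ≠ c • conjPt s'

namespace IsConjugateSplitting

variable {F G : MvPolynomial (Fin 3) ℂ} {S : Set (Fin 3 → ℂ)}

lemma eval_realPt_ne_zero (hS : IsConjugateSplitting F G S) {x : Fin 3 → ℝ} (hx : x ≠ 0)
    (hFx : eval (realPt x) F = 0) : eval (realPt x) G ≠ 0 := by
  intro hGx
  have hx' : realPt x ≠ 0 := fun hzero => hx (injective_realPt (by simpa [realPt] using! hzero))
  obtain ⟨s, hs, c, hc, hxs⟩ : ∃ s ∈ S, ∃ c : ℂ, c ≠ 0 ∧ realPt x = c • s := by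
    obtain ⟨s, ⟨hs | ⟨s', hs', rfl⟩, c, hc, hxs⟩, -⟩ := hS.existsUnique _ hx' hFx hGx
    · exact ⟨s, hs, c, hc, hxs⟩
    · refine ⟨s', hs', conj c, (map_ne_zero _).mpr hc, ?_⟩
      rw [← conjPt_realPt, hxs, conjPt_smul, conjPt_conjPt]
  refine hS.ne_smul_conjPt s hs s hs (c⁻¹ * conj c)
    (mul_ne_zero (inv_ne_zero hc) ((map_ne_zero _).mpr hc)) ?_
  rw [mul_smul, ← conjPt_smul, ← hxs, conjPt_realPt, hxs, inv_smul_smul₀ hc]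

lemma isCommonZero_of_mem_union (hS : IsConjugateSplitting F G S) (hF : map conj F = F)
    (hG : map conj G = G) {z : Fin 3 → ℂ} (hz : z ∈ S ∪ conjPt '' S) :
    z ≠ 0 ∧ eval z F = 0 ∧ eval z G = 0 := by
  rcases hz with hz | ⟨s, hs, rfl⟩
  · exact hS.isCommonZero z hz
  · obtain ⟨hs0, hFs, hGs⟩ := hS.isCommonZero s hs
    refine ⟨fun hzero => hs0 (injective_conjPt (hzero.trans ?_)), ?_, ?_⟩
    · simp [conjPt, funext_iff]
    · rw [← hF, eval_conjPt_map_conj, hFs, map_zero]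
    · rw [← hG, eval_conjPt_map_conj, hGs, map_zero]

lemma exists_isCommonZeroSet (hS : IsConjugateSplitting F G S) (hF : map conj F = F)
    (hG : map conj G = G) {n : ℕ} {a : Fin (n + 1) → MvPolynomial (Fin 3) ℂ}
    (hspan : ∀ h : MvPolynomial (Fin 3) ℂ, h.IsHomogeneous n → (∀ s ∈ S, eval s h = 0) →
      h ∈ Submodule.span ℂ (Set.range a)) :
    ∃ Z : Finset (Fin 3 → ℂ), IsCommonZeroSet F G Z ∧ Z.card = (n + 1) * n ∧
      ∀ z ∈ Z, z ∈ S ∨ conjPt z ∈ S := by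
  classical
  obtain ⟨S₀, hsub, hS₀⟩ := exists_finset_subset_two_mul_card_eq hspan
  have hmem {z : Fin 3 → ℂ} (hz : z ∈ S₀ ∪ S₀.image conjPt) : z ∈ S ∪ conjPt '' S := by
    rcases Finset.mem_union.mp hz with hz | hz
    · exact Or.inl (hsub hz)
    · obtain ⟨s, hs, rfl⟩ := Finset.mem_image.mp hz
      exact Or.inr ⟨s, hsub hs, rfl⟩
  have hzero {z : Fin 3 → ℂ} (hz : z ∈ S₀ ∪ S₀.image conjPt) :=
    hS.isCommonZero_of_mem_union hF hG (hmem hz)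
  refine ⟨S₀ ∪ S₀.image conjPt, ⟨fun z hz => (hzero hz).1, fun z hz => (hzero hz).2.1,
    fun z hz => (hzero hz).2.2, fun z hz w hw hwz c hzw => hwz ?_⟩, ?_, fun z hz => ?_⟩
  · obtain ⟨hz0, hFz, hGz⟩ := hzero hz
    have hc : c ≠ 0 := by
      rintro rfl
      exact hz0 (hzw.trans (zero_smul _ _))
    exact (hS.existsUnique z hz0 hFz hGz).unique ⟨hmem hw, c, hc, hzw⟩
      ⟨hmem hz, 1, one_ne_zero, (one_smul _ _).symm⟩
  · rw [Finset.card_union_of_disjoint, Finset.card_image_of_injective _ injective_conjPt,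
      ← two_mul, hS₀]
    refine Finset.disjoint_left.mpr fun z hz hz' => ?_
    obtain ⟨s, hs, rfl⟩ := Finset.mem_image.mp hz'
    exact hS.ne_smul_conjPt _ (hsub hz) s (hsub hs) 1 one_ne_zero (one_smul _ _).symm
  · rcases hmem hz with hz | ⟨s, hs, rfl⟩
    · exact Or.inl hz
    · exact Or.inr (by rwa [conjPt_conjPt])

end IsConjugateSplitting

end Conjugation

section Quadrature

open MvPolynomial

lemma prod_sub_mul_prod_erase_sub_pos {n : ℕ} {t : Fin (n + 1) → ℝ} {s : Fin n → ℝ}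
    (hts : ∀ i, t i.castSucc < s i) (hst : ∀ i, s i < t i.succ) (r : Fin (n + 1)) :
    0 < (∏ i, (t r - s i)) * ∏ j ∈ Finset.univ.erase r, (t r - t j) := by
  have ht : StrictMono t := Fin.strictMono_iff_lt_succ.mpr fun i => (hts i).trans (hst i)
  have herase : Finset.univ.erase r = Finset.univ.map (Fin.succAboveEmb r) := by
    rw [Finset.map_eq_image, Fin.coe_succAboveEmb, Fin.image_succAbove_univ, Finset.compl_singleton]
  rw [herase, Finset.prod_map, ← Finset.prod_mul_distrib]
  refine Finset.prod_pos fun i _ => ?_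
  rw [Fin.coe_succAboveEmb]
  rcases lt_or_ge i.castSucc r with hir | hri
  · have hsi : s i < t r := (hst i).trans_le (ht.monotone (Fin.castSucc_lt_iff_succ_le.mp hir))
    rw [Fin.succAbove_of_castSucc_lt _ _ hir]
    exact mul_pos (sub_pos.mpr hsi) (sub_pos.mpr (ht hir))
  · have hsi : t r < s i := (ht.monotone hri).trans_lt (hts i)
    rw [Fin.succAbove_of_le_castSucc _ _ hri]
    exact mul_pos_of_neg_of_neg (sub_neg.mpr hsi)
      (sub_neg.mpr (ht (hri.trans_lt i.castSucc_lt_succ)))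

lemma Interlaces.exists_strict {n : ℕ} {f g : MvPolynomial (Fin 3) ℝ} {e : Fin 3 → ℝ}
    (hint : Interlaces (n + 1) f g e) (hfg : ∀ x ≠ 0, eval x f = 0 → eval x g ≠ 0)
    {p : Fin 3 → ℝ} (hp : p ∉ Submodule.span ℝ {e}) :
    ∃ (t : Fin (n + 1) → ℝ) (s : Fin n → ℝ),
      (∀ i, t i.castSucc < s i) ∧ (∀ i, s i < t i.succ) ∧
      restrictLine f e p = Polynomial.C (eval e f) * ∏ r, (Polynomial.X - Polynomial.C (t r)) ∧
      restrictLine g e p = Polynomial.C (eval e g) * ∏ i, (Polynomial.X - Polynomial.C (s i)) := by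
  obtain ⟨t, s, -, -, hf, hg, hts⟩ := hint p
  have hne (r : Fin (n + 1)) (i : Fin n) : t r ≠ s i := by
    intro hrs
    have hft : eval (t r • e + p) f = 0 := by
      rw [← eval_lineHom]
      exact (congrArg (Polynomial.eval (t r)) hf).trans (by
        simp [Polynomial.eval_prod, Finset.prod_eq_zero (Finset.mem_univ r)])
    have hgt : eval (t r • e + p) g = 0 := by
      rw [← eval_lineHom, hrs]
      exact (congrArg (Polynomial.eval (s i)) hg).trans (by
        simp [Polynomial.eval_prod, Finset.prod_eq_zero (Finset.mem_univ i)])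
    refine hfg _ (fun hzero => hp (Submodule.mem_span_singleton.mpr ⟨-t r, ?_⟩)) hft hgt
    rw [neg_smul, neg_eq_of_add_eq_zero_right hzero]
  exact ⟨t, s, fun i => (hts i (by omega)).1.lt_of_ne (hne _ _),
    fun i => (hts i (by omega)).2.lt_of_ne (hne _ _).symm, hf, hg⟩

/-- The real points `t r • e + p` are the intersection points of the curve `F = 0` with the line
through `e` and `p`, and the weights `ω r` recover the coefficient of degree `n` of a polynomial
`q` of degree at most `n` from the values of `G * q` at these points. Positivity of the weights
encodes that `G` interlaces `F` along the line. -/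
structure LineQuadrature {n : ℕ} (F G : MvPolynomial (Fin 3) ℂ) (e p : Fin 3 → ℝ)
    (t ω : Fin (n + 1) → ℝ) : Prop where
  injective : Function.Injective t
  weight_pos : ∀ r, 0 < ω r
  lineHom_eq : lineHom (realPt e) (realPt p) F =
    Polynomial.C (eval (realPt e) F) * ∏ r, (Polynomial.X - Polynomial.C (t r : ℂ))
  eval_ne_zero : ∀ r, eval (realPt (t r • e + p)) G ≠ 0
  coeff_eq_sum : ∀ q : Polynomial ℂ, q.degree < (n + 1 : ℕ) →
    q.coeff n = ∑ r, (ω r : ℂ) * (eval (realPt (t r • e + p)) G * q.eval (t r : ℂ))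

lemma Interlaces.exists_lineQuadrature {n : ℕ} {f g : MvPolynomial (Fin 3) ℝ} {e : Fin 3 → ℝ}
    (hint : Interlaces (n + 1) f g e) (hge : 0 < eval e g)
    (hfg : ∀ x ≠ 0, eval x f = 0 → eval x g ≠ 0) {p : Fin 3 → ℝ}
    (hp : p ∉ Submodule.span ℝ {e}) :
    ∃ t ω : Fin (n + 1) → ℝ, LineQuadrature (complexify f) (complexify g) e p t ω := by
  obtain ⟨t, s, hts, hst, hf, hg⟩ := hint.exists_strict hfg hp
  have ht : StrictMono t := Fin.strictMono_iff_lt_succ.mpr fun i => (hts i).trans (hst i)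
  have hgt (r : Fin (n + 1)) : eval (t r • e + p) g = eval e g * ∏ i, (t r - s i) := by
    rw [← eval_lineHom]
    exact (congrArg (Polynomial.eval (t r)) hg).trans (by simp [Polynomial.eval_prod])
  have hpos (r : Fin (n + 1)) :
      0 < eval (t r • e + p) g * ∏ j ∈ Finset.univ.erase r, (t r - t j) := by
    rw [hgt, mul_assoc]
    exact mul_pos hge (prod_sub_mul_prod_erase_sub_pos hts hst r)
  refine ⟨t, fun r => (eval (t r • e + p) g * ∏ j ∈ Finset.univ.erase r, (t r - t j))⁻¹,
    ht.injective, fun r => inv_pos.mpr (hpos r), ?_, fun r => ?_, fun q hq => ?_⟩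
  · rw [lineHom_complexify, hf, eval_realPt_complexify]
    simp [Polynomial.map_prod]
  · rw [eval_realPt_complexify]
    exact_mod_cast left_ne_zero_of_mul (hpos r).ne'
  · have hinj : Set.InjOn (fun r => (t r : ℂ)) (Finset.univ : Finset (Fin (n + 1))) :=
      (Complex.ofReal_injective.comp ht.injective).injOn
    have hLagrange := Lagrange.coeff_eq_sum hinj (P := q) (by simpa using hq)
    rw [Finset.card_univ, Fintype.card_fin, Nat.add_sub_cancel] at hLagrange
    rw [hLagrange]
    refine Finset.sum_congr rfl fun r _ => ?_
    have hG : (eval (t r • e + p) g : ℂ) ≠ 0 := by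
      exact_mod_cast left_ne_zero_of_mul (hpos r).ne'
    rw [eval_realPt_complexify, div_eq_mul_inv]
    push_cast
    rw [mul_inv, mul_assoc, mul_left_comm, inv_mul_cancel_left₀ hG, mul_comm]

namespace LineQuadrature

variable {n : ℕ} {F G : MvPolynomial (Fin 3) ℂ} {e p : Fin 3 → ℝ} {t ω : Fin (n + 1) → ℝ}

lemma eval_eq_zero (hquad : LineQuadrature F G e p t ω) (r : Fin (n + 1)) :
    eval (realPt (t r • e + p)) F = 0 := by
  rw [realPt_smul_add, ← eval_lineHom, hquad.lineHom_eq, Polynomial.eval_mul,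
    Polynomial.eval_prod, Finset.prod_eq_zero (Finset.mem_univ r) (by simp), mul_zero]

lemma coprimeOnLine (hquad : LineQuadrature F G e p t ω) (hFe : eval (realPt e) F ≠ 0) :
    CoprimeOnLine (realPt e) (realPt p) F G := by
  refine ⟨hFe, ?_⟩
  rw [hquad.lineHom_eq]
  refine (isCoprime_mul_unit_left_left (Polynomial.isUnit_C.mpr hFe.isUnit) _ _).mpr
    (IsCoprime.prod_left fun r _ => ?_)
  refine (Polynomial.irreducible_X_sub_C _).coprime_iff_not_dvd.mpr fun hdvd =>
    hquad.eval_ne_zero r ?_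
  rwa [Polynomial.dvd_iff_isRoot, Polynomial.IsRoot, eval_lineHom, ← realPt_smul_add] at hdvd

lemma posDef_diagonal (hquad : LineQuadrature F G e p t ω) :
    (Matrix.diagonal fun r => (ω r : ℂ)).PosDef :=
  Matrix.PosDef.diagonal fun r => by exact_mod_cast hquad.weight_pos r

lemma eval_realPt_eq_zero (hquad : LineQuadrature F G e p t ω) {h : MvPolynomial (Fin 3) ℂ}
    (hdegree : (lineHom (realPt e) (realPt p) h).degree < (n + 1 : ℕ))
    (hnodes : ∀ r, eval (realPt (t r • e + p)) h = 0) : eval (realPt p) h = 0 := by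
  have hline : lineHom (realPt e) (realPt p) h = 0 :=
    Polynomial.eq_zero_of_degree_lt_of_eval_index_eq_zero Finset.univ
      (Complex.ofReal_injective.comp hquad.injective).injOn (by simpa using hdegree)
      fun r _ => by simpa only [Function.comp_apply, eval_lineHom, realPt_smul_add] using hnodes r
  rw [← coeff_zero_lineHom (realPt e), hline, Polynomial.coeff_zero]

end LineQuadrature

lemma exists_notMem_span_singleton (e : Fin 3 → ℝ) : ∃ p, p ∉ Submodule.span ℝ {e} := by
  by_contra! hspan
  have hrank := finrank_span_le_card (R := ℝ) {e}
  rw [Submodule.eq_top_iff'.mpr hspan] at hrank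
  simp at hrank

lemma eq_zero_of_forall_eval_realPt_eq_zero_of_notMem_span {e : Fin 3 → ℝ}
    {h : MvPolynomial (Fin 3) ℂ}
    (hh : ∀ p ∉ Submodule.span ℝ {e}, eval (realPt p) h = 0) : h = 0 := by
  obtain ⟨q, hq⟩ := exists_notMem_span_singleton e
  obtain ⟨φ, hφq, hφe⟩ := Submodule.exists_le_ker_of_notMem hq
  have hφ : complexify (linearForm φ) ≠ 0 := fun hzero => hφq <| by
    rw [← eval_linearForm, ← Complex.ofReal_eq_zero, ← eval_realPt_complexify, hzero, map_zero]
  refine (mul_eq_zero.mp (eq_zero_of_forall_eval_realPt_eq_zero fun p => ?_)).resolve_left hφ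
  rw [map_mul, eval_realPt_complexify, eval_linearForm]
  by_cases hp : p ∈ Submodule.span ℝ {e}
  · rw [LinearMap.mem_ker.mp (hφe hp), Complex.ofReal_zero, zero_mul]
  · rw [hh p hp, mul_zero]

lemma exists_basis_realPt {e : Fin 3 → ℝ} (he : e ≠ 0) {p : Fin 3 → ℝ}
    (hp : p ∉ Submodule.span ℝ {e}) :
    ∃ B : Module.Basis (Fin 3) ℂ (Fin 3 → ℂ), B 0 = realPt e ∧ B 1 = realPt p := by
  have he' : realPt e ≠ 0 := fun hzero => he (injective_realPt (by simpa [realPt] using! hzero))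
  have hpair : LinearIndependent ℂ ![realPt e, realPt p] := by
    refine (LinearIndependent.pair_iff' he').mpr fun c hc =>
      hp (Submodule.mem_span_singleton.mpr ⟨c.re, ?_⟩)
    ext i
    simpa [realPt] using congrArg Complex.re (congrFun hc i)
  obtain ⟨q, hq⟩ := exists_linearIndependent_snoc_of_lt_finrank hpair (by simp)
  refine ⟨basisOfLinearIndependentOfCardEqFinrank hq (by simp), ?_, ?_⟩
  · simp only [coe_basisOfLinearIndependentOfCardEqFinrank]
    rfl
  · simp only [coe_basisOfLinearIndependentOfCardEqFinrank]
    rfl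

end Quadrature

section GramQuotient

open MvPolynomial ComplexConjugate

variable {n : ℕ} {F G : MvPolynomial (Fin 3) ℂ}
  {a : Fin (n + 1) → MvPolynomial (Fin 3) ℂ}
  {b : Matrix (Fin (n + 1)) (Fin (n + 1)) (MvPolynomial (Fin 3) ℂ)}

/-- The matrix of forms `b` of degree `n` satisfies `āᵀ a ≡ G b` modulo `F`. On the curve `F = 0`
it is the rank one matrix `āᵀ a / G`, which is the shape of the adjugate of the pencil sought. -/
structure IsGramQuotient (F G : MvPolynomial (Fin 3) ℂ) (a : Fin (n + 1) → MvPolynomial (Fin 3) ℂ)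
    (b : Matrix (Fin (n + 1)) (Fin (n + 1)) (MvPolynomial (Fin 3) ℂ)) : Prop where
  isHomogeneous : ∀ k i, (b k i).IsHomogeneous n
  dvd_sub : ∀ k i, F ∣ map conj (a k) * a i - G * b k i

lemma IsConjugateSplitting.exists_isGramQuotient {S : Set (Fin 3 → ℂ)}
    (hS : IsConjugateSplitting F G S) {B : Module.Basis (Fin 3) ℂ (Fin 3 → ℂ)}
    (hFG : CoprimeOnLine (B 0) (B 1) F G)
    (hF : F.IsHomogeneous (n + 1)) (hFreal : map conj F = F)
    (hG : G.IsHomogeneous n) (hGreal : map conj G = G)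
    (ha : ∀ i, (a i).IsHomogeneous n) (hvanish : ∀ i, ∀ s ∈ S, eval s (a i) = 0)
    (hspan : ∀ h : MvPolynomial (Fin 3) ℂ, h.IsHomogeneous n → (∀ s ∈ S, eval s h = 0) →
      h ∈ Submodule.span ℂ (Set.range a)) :
    ∃ b, IsGramQuotient F G a b := by
  obtain ⟨Z, hZ, hcard, hZS⟩ := hS.exists_isCommonZeroSet hFreal hGreal hspan
  have hproduct (k i : Fin (n + 1)) : ∀ z ∈ Z, eval z (map conj (a k) * a i) = 0 := by
    intro z hz
    rw [map_mul]
    rcases hZS z hz with hzS | hzS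
    · rw [hvanish i z hzS, mul_zero]
    · rw [← conjPt_conjPt z, eval_conjPt_map_conj, hvanish k _ hzS, map_zero, zero_mul]
  choose b hb hdvd using fun k i => hFG.exists_dvd_sub_mul_of_forall_eval_eq_zero hF hG hZ hcard
    (((ha k).map conj).mul (ha i)) (hproduct k i)
  exact ⟨b, hb, hdvd⟩

namespace IsGramQuotient

lemma map_conj_eq (hb : IsGramQuotient F G a b) {B : Module.Basis (Fin 3) ℂ (Fin 3 → ℂ)}
    (hFG : CoprimeOnLine (B 0) (B 1) F G) (hF : F.IsHomogeneous (n + 1))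
    (hFreal : map conj F = F) (hGreal : map conj G = G) (k i : Fin (n + 1)) :
    map conj (b k i) = b i k := by
  refine sub_eq_zero.mp (hFG.eq_zero_of_dvd_mul hF n.lt_succ_self
    (((hb.isHomogeneous k i).map conj).sub (hb.isHomogeneous i k)) ?_)
  have hconj := map_dvd (map conj) (hb.dvd_sub k i)
  rw [map_sub, map_mul, map_mul, map_conj_map_conj, hFreal, hGreal] at hconj
  convert (hb.dvd_sub i k).sub hconj using 1
  ring

lemma apply_eq (hb : IsGramQuotient F G a b) {B : Module.Basis (Fin 3) ℂ (Fin 3 → ℂ)}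
    (hFG : CoprimeOnLine (B 0) (B 1) F G) (hF : F.IsHomogeneous (n + 1))
    (hGreal : map conj G = G) (ha : ∀ i, (a i).IsHomogeneous n) {i₀ : Fin (n + 1)}
    (hi₀ : a i₀ = G) (i : Fin (n + 1)) : b i₀ i = a i := by
  refine (sub_eq_zero.mp (hFG.eq_zero_of_dvd_mul hF n.lt_succ_self
    ((ha i).sub (hb.isHomogeneous i₀ i)) ?_)).symm
  have hdvd := hb.dvd_sub i₀ i
  rwa [hi₀, hGreal, ← mul_sub] at hdvd

lemma eval_mul_eval (hb : IsGramQuotient F G a b) {x : Fin 3 → ℝ} (hFx : eval (realPt x) F = 0)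
    (k i : Fin (n + 1)) :
    eval (realPt x) G * eval (realPt x) (b k i) =
      conj (eval (realPt x) (a k)) * eval (realPt x) (a i) := by
  have hzero := zero_dvd_iff.mp (hFx ▸ map_dvd (eval (realPt x)) (hb.dvd_sub k i))
  rw [map_sub, map_mul, map_mul, eval_realPt_map_conj] at hzero
  exact (sub_eq_zero.mp hzero).symm

end IsGramQuotient

/-- The values of the polynomials `a i` (columns) at the points `t r • e + p` (rows). -/
noncomputable def nodeMatrix (a : Fin (n + 1) → MvPolynomial (Fin 3) ℂ) (e p : Fin 3 → ℝ)
    (t : Fin (n + 1) → ℝ) : Matrix (Fin (n + 1)) (Fin (n + 1)) ℂ :=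
  Matrix.of fun r i => eval (realPt (t r • e + p)) (a i)

lemma nodeMatrix_mulVec (a : Fin (n + 1) → MvPolynomial (Fin 3) ℂ) (e p : Fin 3 → ℝ)
    (t : Fin (n + 1) → ℝ) (x : Fin (n + 1) → ℂ) (r : Fin (n + 1)) :
    (nodeMatrix a e p t *ᵥ x) r = eval (realPt (t r • e + p)) (∑ i, x i • a i) := by
  simp [nodeMatrix, Matrix.mulVec, dotProduct, smul_eval, mul_comm]

namespace IsGramQuotient

variable {e : Fin 3 → ℝ}

lemma map_eval_eq_conjTranspose_mul (hb : IsGramQuotient F G a b) {p : Fin 3 → ℝ}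
    {t ω : Fin (n + 1) → ℝ} (hquad : LineQuadrature F G e p t ω) :
    b.map (eval (realPt e)) =
      (nodeMatrix a e p t)ᴴ * Matrix.diagonal (fun r => (ω r : ℂ)) * nodeMatrix a e p t := by
  ext k i
  rw [Matrix.map_apply, ← coeff_lineHom_eq_eval (hb.isHomogeneous k i) _ (realPt p),
    hquad.coeff_eq_sum _ (degree_lineHom_lt (hb.isHomogeneous k i) n.lt_succ_self _ _),
    Matrix.mul_apply]
  refine Finset.sum_congr rfl fun r _ => ?_
  rw [eval_lineHom, ← realPt_smul_add, hb.eval_mul_eval (hquad.eval_eq_zero r),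
    Matrix.mul_diagonal, Matrix.conjTranspose_apply]
  simp only [nodeMatrix, Matrix.of_apply, starRingEnd_apply]
  ring

lemma nodeMatrix_mulVec_eq_zero (hb : IsGramQuotient F G a b) {p : Fin 3 → ℝ}
    {t ω : Fin (n + 1) → ℝ} (hquad : LineQuadrature F G e p t ω) {x : Fin (n + 1) → ℂ}
    (hx : b.map (eval (realPt e)) *ᵥ x = 0) : nodeMatrix a e p t *ᵥ x = 0 := by
  by_contra hne
  refine (hquad.posDef_diagonal.dotProduct_mulVec_pos hne).ne' ?_
  rw [Matrix.star_mulVec, ← Matrix.dotProduct_mulVec, Matrix.mulVec_mulVec, Matrix.mulVec_mulVec,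
    ← hb.map_eval_eq_conjTranspose_mul hquad, hx, dotProduct_zero]

theorem posDef_map_eval (hb : IsGramQuotient F G a b)
    (hquad : ∀ p ∉ Submodule.span ℝ {e}, ∃ t ω : Fin (n + 1) → ℝ, LineQuadrature F G e p t ω)
    (ha : ∀ i, (a i).IsHomogeneous n) (hindep : LinearIndependent ℂ a) :
    (b.map (eval (realPt e))).PosDef := by
  have hpsd : (b.map (eval (realPt e))).PosSemidef := by
    obtain ⟨p, hp⟩ := exists_notMem_span_singleton e
    obtain ⟨t, ω, hline⟩ := hquad p hp
    rw [hb.map_eval_eq_conjTranspose_mul hline]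
    exact hline.posDef_diagonal.posSemidef.conjTranspose_mul_mul_same _
  refine hpsd.posDef_iff_isUnit.mpr (Matrix.mulVec_injective_iff_isUnit.mp
    ((injective_iff_map_eq_zero (Matrix.mulVecLin _)).mpr fun x hx => ?_))
  have hcombination : ∑ i, x i • a i = 0 := by
    refine eq_zero_of_forall_eval_realPt_eq_zero_of_notMem_span (e := e) fun p hp => ?_
    obtain ⟨t, ω, hline⟩ := hquad p hp
    have hhom : (∑ i, x i • a i).IsHomogeneous n :=
      IsHomogeneous.sum _ _ _ fun i _ => smul_eq_C_mul (a i) (x i) ▸ (ha i).C_mul _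
    refine hline.eval_realPt_eq_zero (degree_lineHom_lt hhom n.lt_succ_self _ _) fun r => ?_
    rw [← nodeMatrix_mulVec, hb.nodeMatrix_mulVec_eq_zero hline hx, Pi.zero_apply]
  exact funext (Fintype.linearIndependent_iff.mp hindep x hcombination)

lemma isUnit_nodeMatrix (hb : IsGramQuotient F G a b) {p : Fin 3 → ℝ}
    {t ω : Fin (n + 1) → ℝ} (hquad : LineQuadrature F G e p t ω)
    (hposDef : (b.map (eval (realPt e))).PosDef) : IsUnit (nodeMatrix a e p t) := by
  have hunit := hposDef.isUnit
  rw [hb.map_eval_eq_conjTranspose_mul hquad] at hunit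
  exact isUnit_of_mul_isUnit_right hunit

end IsGramQuotient

end GramQuotient

section Pencil

open MvPolynomial ComplexConjugate

variable {d : ℕ} (M : Fin 3 → Matrix (Fin d) (Fin d) ℂ)

lemma map_eval_pencil (x : Fin 3 → ℂ) :
    (pencil (M 0) (M 1) (M 2)).map (eval x) = ∑ l, x l • M l := by
  ext i j
  simp [pencil, Fin.sum_univ_three]

lemma pderiv_pencil (l : Fin 3) (i j : Fin d) :
    pderiv l (pencil (M 0) (M 1) (M 2) i j) = C (M l i j) := by
  fin_cases l <;> simp [pencil, pderiv_X]

lemma isHomogeneous_pencil (i j : Fin d) : (pencil (M 0) (M 1) (M 2) i j).IsHomogeneous 1 := by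
  have hterm (l : Fin 3) : (X l * C (M l i j)).IsHomogeneous 1 :=
    mul_comm (C (M l i j)) (X l) ▸ (isHomogeneous_X ℂ l).C_mul _
  exact ((hterm 0).add (hterm 1)).add (hterm 2)

lemma isHomogeneous_det_pencil : (pencil (M 0) (M 1) (M 2)).det.IsHomogeneous d := by
  rw [Matrix.det_apply']
  refine IsHomogeneous.sum _ _ _ fun σ _ => ?_
  have hprod := IsHomogeneous.prod Finset.univ (fun i => pencil (M 0) (M 1) (M 2) (σ i) i)
    (fun _ => 1) fun i _ => isHomogeneous_pencil M (σ i) i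
  rw [Finset.sum_const, Finset.card_univ, Fintype.card_fin, smul_eq_mul, mul_one] at hprod
  simpa only [map_intCast] using hprod.C_mul ((Equiv.Perm.sign σ : ℤ) : ℂ)

lemma eval_det_pencil (x : Fin 3 → ℂ) :
    eval x (pencil (M 0) (M 1) (M 2)).det = (∑ l, x l • M l).det := by
  rw [RingHom.map_det, RingHom.mapMatrix_apply, map_eval_pencil]

lemma pencil_sub (M' : Fin 3 → Matrix (Fin d) (Fin d) ℂ) :
    pencil ((M - M') 0) ((M - M') 1) ((M - M') 2) =
      pencil (M 0) (M 1) (M 2) - pencil (M' 0) (M' 1) (M' 2) := by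
  ext1 i j
  simp only [pencil, Pi.sub_apply, Matrix.sub_apply, map_sub]
  ring

variable {M}

lemma eq_zero_of_pencil_eq_zero (hM : pencil (M 0) (M 1) (M 2) = 0) : M = 0 := by
  ext l i j
  apply C_injective (Fin 3) ℂ
  rw [← pderiv_pencil M, hM]
  simp

lemma map_conj_pencil (hM : ∀ l, (M l).IsHermitian) :
    (pencil (M 0) (M 1) (M 2)).map (map conj) = (pencil (M 0) (M 1) (M 2))ᵀ := by
  ext1 i j
  have hentry (l : Fin 3) : conj (M l i j) = M l j i := (hM l).apply j i
  simp [pencil, hentry]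

lemma pencil_mulVec_map_conj {F : MvPolynomial (Fin 3) ℂ} (hFreal : map conj F = F)
    (hM : ∀ l, (M l).IsHermitian) {a : Fin d → MvPolynomial (Fin 3) ℂ} {i₀ : Fin d}
    (haM : a ᵥ* pencil (M 0) (M 1) (M 2) = Pi.single i₀ F) :
    pencil (M 0) (M 1) (M 2) *ᵥ (fun j => map conj (a j)) = Pi.single i₀ F := by
  ext1 i
  have hconj := RingHom.map_vecMul (map conj) (pencil (M 0) (M 1) (M 2)) a i
  rw [haM, map_conj_pencil hM, Matrix.vecMul_transpose] at hconj
  refine hconj.symm.trans ?_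
  rcases eq_or_ne i i₀ with rfl | hi
  · rw [Pi.single_eq_same, hFreal]
  · rw [Pi.single_eq_of_ne hi, map_zero]

lemma CoprimeOnLine.C_mul_det_pencil {n : ℕ} {M : Fin 3 → Matrix (Fin (n + 1)) (Fin (n + 1)) ℂ}
    {F G : MvPolynomial (Fin 3) ℂ} {B : Module.Basis (Fin 3) ℂ (Fin 3 → ℂ)}
    (hFG : CoprimeOnLine (B 0) (B 1) F G) (hF : F.IsHomogeneous (n + 1))
    {a : Fin (n + 1) → MvPolynomial (Fin 3) ℂ} {i₀ : Fin (n + 1)} (hi₀ : a i₀ = G)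
    (haM : a ᵥ* pencil (M 0) (M 1) (M 2) = Pi.single i₀ F) :
    C (eval (B 0) F) * (pencil (M 0) (M 1) (M 2)).det = C (∑ l, B 0 l • M l).det * F := by
  rw [← eval_det_pencil]
  refine hFG.C_mul_eq_C_mul_of_dvd_mul hF (isHomogeneous_det_pencil M)
    ⟨(pencil (M 0) (M 1) (M 2)).adjugate i₀ i₀, ?_⟩
  have hadjugate := congrArg (· ᵥ* (pencil (M 0) (M 1) (M 2)).adjugate) haM
  simp only [Matrix.vecMul_vecMul, Matrix.mul_adjugate, Matrix.vecMul_smul, Matrix.vecMul_one,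
    Matrix.single_vecMul] at hadjugate
  simpa [hi₀, mul_comm] using congrFun hadjugate i₀

end Pencil

section Construction

open MvPolynomial ComplexConjugate

lemma sum_mul_eval_pderiv {σ R : Type*} [Fintype σ] [CommSemiring R] {m : ℕ}
    {h : MvPolynomial σ R} (hh : h.IsHomogeneous m) (x : σ → R) :
    ∑ l, x l * eval x (pderiv l h) = m * eval x h := by
  simpa using congrArg (eval x) hh.sum_X_mul_pderiv

/-- The partial derivatives at `x` of the matrix of rational functions `F b⁻¹`. If `b` is the
adjugate of a linear pencil with determinant `F`, these are the coefficient matrices of the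
pencil. -/
noncomputable def pencilCoeff {d : ℕ} (F : MvPolynomial (Fin 3) ℂ)
    (b : Matrix (Fin d) (Fin d) (MvPolynomial (Fin 3) ℂ)) (x : Fin 3 → ℂ) (l : Fin 3) :
    Matrix (Fin d) (Fin d) ℂ :=
  eval x (pderiv l F) • (b.map (eval x))⁻¹ -
    eval x F • ((b.map (eval x))⁻¹ * b.map (fun h => eval x (pderiv l h)) * (b.map (eval x))⁻¹)

section PencilCoeff

variable {d : ℕ} {F : MvPolynomial (Fin 3) ℂ}
  {b : Matrix (Fin d) (Fin d) (MvPolynomial (Fin 3) ℂ)}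

lemma map_eval_pderiv_mul_pencil (b : Matrix (Fin d) (Fin d) (MvPolynomial (Fin 3) ℂ))
    (M : Fin 3 → Matrix (Fin d) (Fin d) ℂ) (x : Fin 3 → ℂ) (l : Fin 3) :
    (b * pencil (M 0) (M 1) (M 2)).map (fun h => eval x (pderiv l h)) =
      b.map (fun h => eval x (pderiv l h)) * (∑ l, x l • M l) + b.map (eval x) * M l := by
  rw [← map_eval_pencil]
  ext k j
  simp only [Matrix.map_apply, Matrix.add_apply, Matrix.mul_apply, map_sum, pderiv_mul,
    pderiv_pencil, map_add, map_mul, eval_C, Finset.sum_add_distrib]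

lemma isHermitian_pencilCoeff (hF : map conj F = F) (hb : ∀ k i, map conj (b k i) = b i k)
    (e : Fin 3 → ℝ) (l : Fin 3) : (pencilCoeff F b (realPt e) l).IsHermitian := by
  have hself {h : MvPolynomial (Fin 3) ℂ} (hh : map conj h = h) :
      star (eval (realPt e) h) = eval (realPt e) h := by
    rw [← starRingEnd_apply, ← eval_realPt_map_conj, hh]
  have hvalue : (b.map (eval (realPt e))).IsHermitian := Matrix.IsHermitian.ext fun i k => by
    rw [Matrix.map_apply, Matrix.map_apply, ← hb i k, eval_realPt_map_conj, starRingEnd_apply,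
      star_star]
  have hpderiv : (b.map fun h => eval (realPt e) (pderiv l h)).IsHermitian :=
    Matrix.IsHermitian.ext fun i k => by
      rw [Matrix.map_apply, Matrix.map_apply, ← hb i k, pderiv_map, eval_realPt_map_conj,
        starRingEnd_apply, star_star]
  rw [Matrix.IsHermitian, pencilCoeff, Matrix.conjTranspose_sub, Matrix.conjTranspose_smul,
    Matrix.conjTranspose_smul, Matrix.conjTranspose_mul, Matrix.conjTranspose_mul, hvalue.inv,
    hpderiv, hself hF, hself (by rw [← pderiv_map, hF]), Matrix.mul_assoc]

variable {x : Fin 3 → ℂ}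

lemma sum_smul_pencilCoeff (hunit : IsUnit (b.map (eval x))) {m : ℕ} (hF : F.IsHomogeneous (m + 1))
    (hb : ∀ k i, (b k i).IsHomogeneous m) :
    ∑ l, x l • pencilCoeff F b x l = eval x F • (b.map (eval x))⁻¹ := by
  have hEuler : ∑ l, x l • b.map (fun h => eval x (pderiv l h)) = (m : ℂ) • b.map (eval x) := by
    ext k i
    rw [Matrix.sum_apply]
    exact sum_mul_eval_pderiv (hb k i) x
  have hsum : ∑ l, x l • pencilCoeff F b x l =
      (∑ l, x l * eval x (pderiv l F)) • (b.map (eval x))⁻¹ - eval x F • ((b.map (eval x))⁻¹ *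
        (∑ l, x l • b.map (fun h => eval x (pderiv l h))) * (b.map (eval x))⁻¹) := by
    simp only [pencilCoeff, Fin.sum_univ_three, mul_add, add_mul, Matrix.mul_smul,
      Matrix.smul_mul]
    module
  rw [hsum, hEuler, sum_mul_eval_pderiv hF, Matrix.mul_smul, Matrix.smul_mul,
    Matrix.nonsing_inv_mul _ ((Matrix.isUnit_iff_isUnit_det _).mp hunit), Matrix.one_mul]
  push_cast
  module

lemma map_eval_pderiv_mul_pencil_pencilCoeff (hunit : IsUnit (b.map (eval x))) {m : ℕ}
    (hF : F.IsHomogeneous (m + 1)) (hb : ∀ k i, (b k i).IsHomogeneous m) (l : Fin 3) :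
    (b * pencil (pencilCoeff F b x 0) (pencilCoeff F b x 1) (pencilCoeff F b x 2)).map
      (fun h => eval x (pderiv l h)) = eval x (pderiv l F) • 1 := by
  have hcancel := Matrix.mul_nonsing_inv _ ((Matrix.isUnit_iff_isUnit_det _).mp hunit)
  rw [map_eval_pderiv_mul_pencil, sum_smul_pencilCoeff hunit hF hb, pencilCoeff, Matrix.mul_sub,
    Matrix.mul_smul, Matrix.mul_smul, Matrix.mul_smul, ← Matrix.mul_assoc, ← Matrix.mul_assoc,
    hcancel, Matrix.one_mul]
  module

end PencilCoeff

namespace IsGramQuotient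

variable {n : ℕ} {F G : MvPolynomial (Fin 3) ℂ} {e : Fin 3 → ℝ}
  {a : Fin (n + 1) → MvPolynomial (Fin 3) ℂ}
  {b : Matrix (Fin (n + 1)) (Fin (n + 1)) (MvPolynomial (Fin 3) ℂ)} {i₀ : Fin (n + 1)}

lemma dvd_map_conj_mul_vecMul_sub (hb : IsGramQuotient F G a b)
    (P : Matrix (Fin (n + 1)) (Fin (n + 1)) (MvPolynomial (Fin 3) ℂ)) (k j : Fin (n + 1)) :
    F ∣ map conj (a k) * (a ᵥ* P) j - G * (b * P) k j := by
  have hterms : map conj (a k) * (a ᵥ* P) j - G * (b * P) k j =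
      ∑ i, (map conj (a k) * a i - G * b k i) * P i j := by
    simp only [Matrix.vecMul, dotProduct, Matrix.mul_apply, Finset.mul_sum, sub_mul,
      Finset.sum_sub_distrib, mul_assoc]
  rw [hterms]
  exact Finset.dvd_sum fun i _ => (hb.dvd_sub k i).mul_right _

-- The quadrature turns the vanishing coefficients of degree `n` of `E k` on a line into a
-- linear system with matrix `(nodeMatrix a e p t)ᴴ` for the values of `E i₀` at the nodes.
lemma eq_zero_of_forall_eval_pderiv_eq_zero (hb : IsGramQuotient F G a b)
    (hquad : ∀ p ∉ Submodule.span ℝ {e}, ∃ t ω : Fin (n + 1) → ℝ, LineQuadrature F G e p t ω)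
    (hposDef : (b.map (eval (realPt e))).PosDef) {E : Fin (n + 1) → MvPolynomial (Fin 3) ℂ}
    (hE : ∀ k, (E k).IsHomogeneous (n + 1))
    (hpderiv : ∀ k l, eval (realPt e) (pderiv l (E k)) = 0)
    (hdvd : ∀ k, F ∣ map conj (a k) * E i₀ - G * E k) : E i₀ = 0 := by
  have heval (k : Fin (n + 1)) : eval (realPt e) (E k) = 0 := by
    have hEuler := sum_mul_eval_pderiv (hE k) (realPt e)
    simp only [hpderiv, mul_zero, Finset.sum_const_zero] at hEuler
    exact (mul_eq_zero.mp hEuler.symm).resolve_left (Nat.cast_ne_zero.mpr n.succ_ne_zero)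
  refine eq_zero_of_forall_eval_realPt_eq_zero_of_notMem_span (e := e) fun p hp => ?_
  obtain ⟨t, ω, hline⟩ := hquad p hp
  have hdegree (k : Fin (n + 1)) := degree_lineHom_lt_of_eval_eq_zero (hE k) (heval k) (realPt p)
  refine hline.eval_realPt_eq_zero (hdegree i₀) fun r => ?_
  have hsystem : (nodeMatrix a e p t)ᴴ *ᵥ
      (fun r => (ω r : ℂ) * eval (realPt (t r • e + p)) (E i₀)) = 0 := by
    ext k
    have hcoeff := hline.coeff_eq_sum _ (hdegree k)
    simp only [coeff_lineHom_eq_sum_pderiv (hE k), hpderiv, mul_zero, Finset.sum_const_zero]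
      at hcoeff
    rw [Matrix.mulVec, dotProduct, Pi.zero_apply]
    refine (Finset.sum_congr rfl fun r _ => ?_).trans hcoeff.symm
    have hnode := zero_dvd_iff.mp
      (hline.eval_eq_zero r ▸ map_dvd (eval (realPt (t r • e + p))) (hdvd k))
    rw [map_sub, map_mul, map_mul, eval_realPt_map_conj, sub_eq_zero] at hnode
    rw [eval_lineHom, ← realPt_smul_add, ← hnode, Matrix.conjTranspose_apply, nodeMatrix,
      Matrix.of_apply, starRingEnd_apply]
    ring
  have hinjective := Matrix.mulVec_injective_iff_isUnit.mpr
    (hb.isUnit_nodeMatrix hline hposDef).star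
  have hzero := congrFun (hinjective (hsystem.trans (Matrix.mulVec_zero _).symm)) r
  exact (mul_eq_zero.mp hzero).resolve_left (by exact_mod_cast (hline.weight_pos r).ne')

theorem vecMul_pencil_pencilCoeff (hb : IsGramQuotient F G a b)
    (hquad : ∀ p ∉ Submodule.span ℝ {e}, ∃ t ω : Fin (n + 1) → ℝ, LineQuadrature F G e p t ω)
    (hposDef : (b.map (eval (realPt e))).PosDef) (hF : F.IsHomogeneous (n + 1))
    (hi₀ : ∀ i, b i₀ i = a i) :
    a ᵥ* pencil (pencilCoeff F b (realPt e) 0) (pencilCoeff F b (realPt e) 1)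
      (pencilCoeff F b (realPt e) 2) = Pi.single i₀ F := by
  set P := pencil (pencilCoeff F b (realPt e) 0) (pencilCoeff F b (realPt e) 1)
    (pencilCoeff F b (realPt e) 2)
  ext1 j
  let E (k : Fin (n + 1)) : MvPolynomial (Fin 3) ℂ := (b * P) k j - C ((1 : Matrix _ _ ℂ) k j) * F
  have hrow : (b * P) i₀ j = (a ᵥ* P) j := by
    simp only [Matrix.mul_apply, hi₀, Matrix.vecMul, dotProduct]
  have hE (k : Fin (n + 1)) : (E k).IsHomogeneous (n + 1) :=
    (IsHomogeneous.sum _ _ _ fun i _ => (hb.isHomogeneous k i).mul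
      (isHomogeneous_pencil (pencilCoeff F b (realPt e)) i j)).sub (hF.C_mul _)
  have hpderiv (k : Fin (n + 1)) (l : Fin 3) : eval (realPt e) (pderiv l (E k)) = 0 := by
    have hderiv := congrFun₂ (map_eval_pderiv_mul_pencil_pencilCoeff hposDef.isUnit hF
      hb.isHomogeneous l) k j
    rw [Matrix.map_apply, Matrix.smul_apply, smul_eq_mul, mul_comm] at hderiv
    rw [map_sub, map_sub, hderiv, pderiv_C_mul, map_mul, eval_C, sub_self]
  have hdvd (k : Fin (n + 1)) : F ∣ map conj (a k) * E i₀ - G * E k := by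
    have hexpand : map conj (a k) * E i₀ - G * E k = (map conj (a k) * (a ᵥ* P) j - G * (b * P) k j)
        - F * (map conj (a k) * C ((1 : Matrix _ _ ℂ) i₀ j) -
          G * C ((1 : Matrix _ _ ℂ) k j)) := by
      simp only [E, hrow]
      ring
    exact hexpand ▸ (hb.dvd_map_conj_mul_vecMul_sub P k j).sub (dvd_mul_right F _)
  have hzero := hb.eq_zero_of_forall_eval_pderiv_eq_zero hquad hposDef hE hpderiv hdvd
  rw [← hrow, sub_eq_zero.mp hzero, Matrix.one_apply, Pi.single_apply]
  simp [eq_comm]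

end IsGramQuotient

end Construction

section Uniqueness

open MvPolynomial ComplexConjugate

lemma linearIndependent_map_conj {ι : Type*} {a : ι → MvPolynomial (Fin 3) ℂ}
    (ha : LinearIndependent ℂ a) : LinearIndependent ℂ fun i => map conj (a i) :=
  ha.map_of_injective_injective conj (map conj : MvPolynomial (Fin 3) ℂ →+* _).toAddMonoidHom
    (fun c hc => (map_eq_zero conj).mp hc)
    (fun h hh => by rw [← map_conj_map_conj h]; exact (congrArg _ hh).trans (map_zero _))
    (fun c h => by simp [smul_eq_C_mul])

lemma eq_zero_of_map_C_mulVec_eq_zero {σ ι κ : Type*} [Fintype ι] {v : ι → MvPolynomial σ ℂ}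
    (hv : LinearIndependent ℂ v) {A : Matrix κ ι ℂ} (hA : A.map C *ᵥ v = 0) : A = 0 := by
  ext k i
  refine Fintype.linearIndependent_iff.mp hv (A k) ?_ i
  simpa [Matrix.mulVec, dotProduct, smul_eq_C_mul] using congrFun hA k

theorem IsGramQuotient.eq_zero_of_vecMul_pencil_eq_zero {n : ℕ} {F G : MvPolynomial (Fin 3) ℂ}
    {a : Fin (n + 1) → MvPolynomial (Fin 3) ℂ}
    {b : Matrix (Fin (n + 1)) (Fin (n + 1)) (MvPolynomial (Fin 3) ℂ)}
    (hb : IsGramQuotient F G a b) {B : Module.Basis (Fin 3) ℂ (Fin 3 → ℂ)}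
    (hFG : CoprimeOnLine (B 0) (B 1) F G) (hF : F.IsHomogeneous (n + 1))
    (hindep : LinearIndependent ℂ a) (hunit : IsUnit (b.map (eval (B 0))))
    {N : Fin 3 → Matrix (Fin (n + 1)) (Fin (n + 1)) ℂ}
    (haN : a ᵥ* pencil (N 0) (N 1) (N 2) = 0)
    (hNa : pencil (N 0) (N 1) (N 2) *ᵥ (fun j => map conj (a j)) = 0) : N = 0 := by
  set P := pencil (N 0) (N 1) (N 2)
  have hmultiple : (C (eval (B 0) F) : MvPolynomial (Fin 3) ℂ) • (b * P) =
      F • ((b * P).map (eval (B 0))).map C := by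
    ext1 k j
    have hdvd := hb.dvd_map_conj_mul_vecMul_sub P k j
    rw [haN, Pi.zero_apply, mul_zero, zero_sub, dvd_neg] at hdvd
    have hhom : ((b * P) k j).IsHomogeneous (n + 1) := IsHomogeneous.sum _ _ _ fun i _ =>
      (hb.isHomogeneous k i).mul (isHomogeneous_pencil N i j)
    exact (hFG.C_mul_eq_C_mul_of_dvd_mul hF hhom hdvd).trans (mul_comm _ _)
  have hvalue : (b * P).map (eval (B 0)) = 0 := by
    refine eq_zero_of_map_C_mulVec_eq_zero (linearIndependent_map_conj hindep) ?_
    have hkernel := congrArg (· *ᵥ fun j => map conj (a j)) hmultiple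
    simp only [Matrix.smul_mulVec, ← Matrix.mulVec_mulVec, hNa, Matrix.mulVec_zero,
      smul_zero] at hkernel
    refine (smul_eq_zero.mp hkernel.symm).resolve_left fun hzero => hFG.eval_ne_zero ?_
    rw [hzero, map_zero]
  have hproduct : b * P = 0 := by
    rw [hvalue, Matrix.map_zero _ (map_zero C), smul_zero] at hmultiple
    exact (smul_eq_zero.mp hmultiple).resolve_left (C_ne_zero.mpr hFG.eval_ne_zero)
  have hdet : b.det ≠ 0 := fun hzero => by
    have := (Matrix.isUnit_iff_isUnit_det _).mp hunit
    rw [← RingHom.mapMatrix_apply, ← RingHom.map_det, hzero, map_zero] at this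
    exact not_isUnit_zero this
  refine eq_zero_of_pencil_eq_zero (Matrix.ext_col fun j => ?_)
  refine Matrix.eq_zero_of_mulVec_eq_zero hdet ?_
  exact funext fun k => congrFun (congrFun hproduct k) j

end Uniqueness

section DeterminantalRepresentation

open MvPolynomial ComplexConjugate

lemma vecMul_eq_single_iff {ι R : Type*} [Fintype ι] [DecidableEq ι] [NonUnitalNonAssocSemiring R]
    {v : ι → R} {P : Matrix ι ι R} {i₀ : ι} {r : R} :
    v ᵥ* P = Pi.single i₀ r ↔ ∀ j, ∑ i, v i * P i j = if j = i₀ then r else 0 := by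
  simp only [funext_iff, Pi.single_apply, Matrix.vecMul, dotProduct]

lemma mulVec_eq_single_iff {ι R : Type*} [Fintype ι] [DecidableEq ι] [NonUnitalNonAssocSemiring R]
    {v : ι → R} {P : Matrix ι ι R} {i₀ : ι} {r : R} :
    P *ᵥ v = Pi.single i₀ r ↔ ∀ i, ∑ j, P i j * v j = if i = i₀ then r else 0 := by
  simp only [funext_iff, Pi.single_apply, Matrix.mulVec, dotProduct]

variable {n : ℕ} {F G : MvPolynomial (Fin 3) ℂ} {e : Fin 3 → ℝ}
  {a : Fin (n + 1) → MvPolynomial (Fin 3) ℂ}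
  {b : Matrix (Fin (n + 1)) (Fin (n + 1)) (MvPolynomial (Fin 3) ℂ)} {i₀ : Fin (n + 1)}
  {B : Module.Basis (Fin 3) ℂ (Fin 3 → ℂ)} {M M' : Fin 3 → Matrix (Fin (n + 1)) (Fin (n + 1)) ℂ}

lemma CoprimeOnLine.exists_pos_eq_C_mul_det_pencil (hFG : CoprimeOnLine (B 0) (B 1) F G)
    (hF : F.IsHomogeneous (n + 1)) (hpos : 0 < eval (B 0) F) (hi₀ : a i₀ = G)
    (haM : a ᵥ* pencil (M 0) (M 1) (M 2) = Pi.single i₀ F) (hM : (∑ l, B 0 l • M l).PosDef) :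
    ∃ c : ℝ, 0 < c ∧ F = C (c : ℂ) * (pencil (M 0) (M 1) (M 2)).det := by
  have hdet := hM.det_pos
  obtain ⟨c, hc, hcdet⟩ := RCLike.pos_iff_exists_ofReal.mp (div_pos hpos hdet)
  refine ⟨c, hc, mul_left_cancel₀ (C_ne_zero.mpr hdet.ne') ?_⟩
  rw [← hFG.C_mul_det_pencil hF hi₀ haM, ← mul_assoc, ← C_mul]
  congr 2
  exact (mul_div_cancel₀ _ hdet.ne').symm.trans (congrArg _ hcdet.symm)

lemma IsGramQuotient.pencil_ext (hb : IsGramQuotient F G a b)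
    (hFG : CoprimeOnLine (B 0) (B 1) F G) (hF : F.IsHomogeneous (n + 1))
    (hindep : LinearIndependent ℂ a) (hunit : IsUnit (b.map (eval (B 0))))
    (hrow : a ᵥ* pencil (M 0) (M 1) (M 2) = a ᵥ* pencil (M' 0) (M' 1) (M' 2))
    (hcolumn : pencil (M 0) (M 1) (M 2) *ᵥ (fun j => map conj (a j)) =
      pencil (M' 0) (M' 1) (M' 2) *ᵥ (fun j => map conj (a j))) : M = M' := by
  refine sub_eq_zero.mp (hb.eq_zero_of_vecMul_pencil_eq_zero hFG hF hindep hunit ?_ ?_)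
  · rw [pencil_sub, Matrix.vecMul_sub, hrow, sub_self]
  · rw [pencil_sub, Matrix.sub_mulVec, hcolumn, sub_self]

theorem IsGramQuotient.exists_isHermitian_pencil (hb : IsGramQuotient F G a b)
    (hFG : CoprimeOnLine (B 0) (B 1) F G)
    (hquad : ∀ p ∉ Submodule.span ℝ {e}, ∃ t ω : Fin (n + 1) → ℝ, LineQuadrature F G e p t ω)
    (hF : F.IsHomogeneous (n + 1)) (hFreal : map conj F = F) (hFe : 0 < eval (realPt e) F)
    (hGreal : map conj G = G) (ha : ∀ i, (a i).IsHomogeneous n) (hi₀ : a i₀ = G)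
    (hposDef : (b.map (eval (realPt e))).PosDef) :
    ∃ M : Fin 3 → Matrix (Fin (n + 1)) (Fin (n + 1)) ℂ, (∀ l, (M l).IsHermitian) ∧
      (∑ l, realPt e l • M l).PosDef ∧
      a ᵥ* pencil (M 0) (M 1) (M 2) = Pi.single i₀ F ∧
      pencil (M 0) (M 1) (M 2) *ᵥ (fun j => map conj (a j)) = Pi.single i₀ F := by
  have hHermitian := isHermitian_pencilCoeff hFreal
    (hb.map_conj_eq hFG hF hFreal hGreal) e
  have hrow := hb.vecMul_pencil_pencilCoeff hquad hposDef hF (hb.apply_eq hFG hF hGreal ha hi₀)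
  refine ⟨pencilCoeff F b (realPt e), hHermitian, ?_, hrow,
    pencil_mulVec_map_conj hFreal hHermitian hrow⟩
  rw [sum_smul_pencilCoeff hposDef.isUnit hF hb.isHomogeneous]
  exact hposDef.inv.smul hFe

lemma exists_basis_coprimeOnLine
    (hquad : ∀ p ∉ Submodule.span ℝ {e}, ∃ t ω : Fin (n + 1) → ℝ, LineQuadrature F G e p t ω)
    (hF : F.IsHomogeneous (n + 1)) (hFe : eval (realPt e) F ≠ 0) :
    ∃ B : Module.Basis (Fin 3) ℂ (Fin 3 → ℂ), B 0 = realPt e ∧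
      CoprimeOnLine (B 0) (B 1) F G := by
  have he : e ≠ 0 := by
    rintro rfl
    have hzero : realPt 0 = (0 : ℂ) • realPt 0 := by ext; simp [realPt]
    rw [hzero, eval_smul_of_isHomogeneous hF, zero_pow n.succ_ne_zero, zero_mul] at hFe
    exact hFe rfl
  obtain ⟨p, hp⟩ := exists_notMem_span_singleton e
  obtain ⟨t, ω, hline⟩ := hquad p hp
  obtain ⟨B, hB₀, hB₁⟩ := exists_basis_realPt he hp
  exact ⟨B, hB₀, hB₀ ▸ hB₁ ▸ hline.coprimeOnLine hFe⟩

theorem IsConjugateSplitting.exists_isHermitian_pencil {S : Set (Fin 3 → ℂ)}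
    (hS : IsConjugateSplitting F G S)
    (hquad : ∀ p ∉ Submodule.span ℝ {e}, ∃ t ω : Fin (n + 1) → ℝ, LineQuadrature F G e p t ω)
    (hF : F.IsHomogeneous (n + 1)) (hFreal : map conj F = F) (hFe : 0 < eval (realPt e) F)
    (hG : G.IsHomogeneous n) (hGreal : map conj G = G) (hi₀ : a i₀ = G)
    (ha : ∀ i, (a i).IsHomogeneous n) (hvanish : ∀ i, ∀ s ∈ S, eval s (a i) = 0)
    (hindep : LinearIndependent ℂ a)
    (hspan : ∀ h : MvPolynomial (Fin 3) ℂ, h.IsHomogeneous n → (∀ s ∈ S, eval s h = 0) →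
      h ∈ Submodule.span ℂ (Set.range a)) :
    ∃ M : Fin 3 → Matrix (Fin (n + 1)) (Fin (n + 1)) ℂ, (∀ l, (M l).IsHermitian) ∧
      (∃ c : ℝ, 0 < c ∧ F = C (c : ℂ) * (pencil (M 0) (M 1) (M 2)).det) ∧
      (∑ l, realPt e l • M l).PosDef ∧
      ∀ N : Fin 3 → Matrix (Fin (n + 1)) (Fin (n + 1)) ℂ,
        (a ᵥ* pencil (N 0) (N 1) (N 2) = Pi.single i₀ F ∧
          pencil (N 0) (N 1) (N 2) *ᵥ (fun j => map conj (a j)) = Pi.single i₀ F) ↔ N = M := by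
  obtain ⟨B, hB, hFG⟩ := exists_basis_coprimeOnLine hquad hF hFe.ne'
  obtain ⟨b, hb⟩ := hS.exists_isGramQuotient hFG hF hFreal hG hGreal ha hvanish hspan
  have hposDef := hb.posDef_map_eval hquad ha hindep
  obtain ⟨M, hM, hMe, hrow, hcolumn⟩ :=
    hb.exists_isHermitian_pencil hFG hquad hF hFreal hFe hGreal ha hi₀ hposDef
  refine ⟨M, hM, hFG.exists_pos_eq_C_mul_det_pencil hF (hB ▸ hFe) hi₀ hrow (hB ▸ hMe), hMe,
    fun N => ⟨fun ⟨hNrow, hNcolumn⟩ => ?_, ?_⟩⟩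
  · exact hb.pencil_ext hFG hF hindep (hB ▸ hposDef.isUnit) (hNrow.trans hrow.symm)
      (hNcolumn.trans hcolumn.symm)
  · rintro rfl
    exact ⟨hrow, hcolumn⟩

end DeterminantalRepresentation

open MvPolynomial in
theorem hermitian_determinantal_representation_interlacer_general {d : ℕ} (i₀ : Fin d)
    {f : MvPolynomial (Fin 3) ℝ} {e : Fin 3 → ℝ}
    (hf : f.IsHomogeneous d) (hfe : 0 < eval e f)
    {g : MvPolynomial (Fin 3) ℝ} (hg : g.IsHomogeneous (d - 1)) (hge : 0 < eval e g)
    (hint : Interlaces d f g e)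
    {S : Set (Fin 3 → ℂ)} (hS : IsConjugateSplitting (complexify f) (complexify g) S)
    {a : Fin d → MvPolynomial (Fin 3) ℂ} (hi₀ : a i₀ = complexify g)
    (ha : ∀ i, (a i).IsHomogeneous (d - 1)) (hvanish : ∀ i, ∀ s ∈ S, eval s (a i) = 0)
    (hindep : LinearIndependent ℂ a)
    (hspan : ∀ h : MvPolynomial (Fin 3) ℂ, h.IsHomogeneous (d - 1) →
      (∀ s ∈ S, eval s h = 0) → h ∈ Submodule.span ℂ (Set.range a)) :
    (∃! T : Matrix (Fin d) (Fin d) ℂ × Matrix (Fin d) (Fin d) ℂ × Matrix (Fin d) (Fin d) ℂ,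
      (∀ j, ∑ i, a i * pencil T.1 T.2.1 T.2.2 i j = if j = i₀ then complexify f else 0) ∧
      (∀ i, ∑ j, pencil T.1 T.2.1 T.2.2 i j * map (starRingEnd ℂ) (a j) =
        if i = i₀ then complexify f else 0)) ∧
    ∀ T : Matrix (Fin d) (Fin d) ℂ × Matrix (Fin d) (Fin d) ℂ × Matrix (Fin d) (Fin d) ℂ,
      (∀ j, ∑ i, a i * pencil T.1 T.2.1 T.2.2 i j = if j = i₀ then complexify f else 0) →
      (∀ i, ∑ j, pencil T.1 T.2.1 T.2.2 i j * map (starRingEnd ℂ) (a j) =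
        if i = i₀ then complexify f else 0) →
      (T.1.IsHermitian ∧ T.2.1.IsHermitian ∧ T.2.2.IsHermitian) ∧
      (∃ c : ℝ, 0 < c ∧ complexify f = C (c : ℂ) * (pencil T.1 T.2.1 T.2.2).det) ∧
      ((e 0 : ℂ) • T.1 + (e 1 : ℂ) • T.2.1 + (e 2 : ℂ) • T.2.2).PosDef := by
  obtain _ | n := d
  · exact i₀.elim0
  have hfg (x : Fin 3 → ℝ) (hx : x ≠ 0) (hfx : eval x f = 0) : eval x g ≠ 0 := by
    simpa [eval_realPt_complexify, hfx] using hS.eval_realPt_ne_zero hx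
  have hFe : 0 < eval (realPt e) (complexify f) := by
    rw [eval_realPt_complexify]
    exact_mod_cast hfe
  obtain ⟨M, hM, hdet, hMe, hiff⟩ := hS.exists_isHermitian_pencil
    (fun _ => hint.exists_lineQuadrature hge hfg) (hf.map _) (map_conj_complexify f) hFe
    (hg.map _) (map_conj_complexify g) hi₀ ha hvanish hindep hspan
  simp only [← vecMul_eq_single_iff, ← mulVec_eq_single_iff]
  have hunique (T : Matrix (Fin (n + 1)) (Fin (n + 1)) ℂ × Matrix (Fin (n + 1)) (Fin (n + 1)) ℂ ×
      Matrix (Fin (n + 1)) (Fin (n + 1)) ℂ)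
      (hrow : a ᵥ* pencil T.1 T.2.1 T.2.2 = Pi.single i₀ (complexify f))
      (hcolumn : pencil T.1 T.2.1 T.2.2 *ᵥ (fun j => map (starRingEnd ℂ) (a j)) =
        Pi.single i₀ (complexify f)) : T = (M 0, M 1, M 2) :=
    (hiff ![T.1, T.2.1, T.2.2]).mp ⟨hrow, hcolumn⟩ ▸ rfl
  refine ⟨⟨(M 0, M 1, M 2), (hiff M).mpr rfl, fun T hT => hunique T hT.1 hT.2⟩,
    fun T hrow hcolumn => ?_⟩
  obtain rfl := hunique T hrow hcolumn
  exact ⟨⟨hM 0, hM 1, hM 2⟩, hdet, by simpa [Fin.sum_univ_three, realPt] using hMe⟩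

/-- The algorithm of the paper with the directional derivative replaced
by an arbitrary interlacing polynomial `g` of degree `d - 1` with `g(e) > 0`:
the linear system `a ⬝ M = (f,0,…,0)`, `M ⬝ āᵀ = (f,0,…,0)ᵀ` has a unique Hermitian
solution `M = x M₁ + y M₂ + z M₃`, and this solution satisfies `f = c • det M` with
`c > 0` and `e₁M₁ + e₂M₂ + e₃M₃` positive definite. -/
theorem hermitian_determinantal_representation_interlacer
    {d : ℕ} (hd : 0 < d)
    (f : MvPolynomial (Fin 3) ℝ) (e : Fin 3 → ℝ)
    (hfhom : f.IsHomogeneous d)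
    (hhyp : IsHyperbolic f e) (hfe : 0 < MvPolynomial.eval e f)
    (hsmooth : ∀ p : Fin 3 → ℂ, p ≠ 0 →
      ¬ (MvPolynomial.eval p (complexify f) = 0 ∧
         ∀ i, MvPolynomial.eval p (MvPolynomial.pderiv i (complexify f)) = 0))
    (g : MvPolynomial (Fin 3) ℝ)
    (hghom : g.IsHomogeneous (d - 1)) (hge : 0 < MvPolynomial.eval e g)
    (hint : Interlaces d f g e)
    (htrans : ∀ p : Fin 3 → ℂ, p ≠ 0 →
      MvPolynomial.eval p (complexify f) = 0 →
      MvPolynomial.eval p (complexify g) = 0 →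
      LinearIndependent ℂ
        ![fun i => MvPolynomial.eval p (MvPolynomial.pderiv i (complexify f)),
          fun i => MvPolynomial.eval p (MvPolynomial.pderiv i (complexify g))])
    (S : Set (Fin 3 → ℂ))
    (hS : ∀ s ∈ S, s ≠ 0 ∧ MvPolynomial.eval s (complexify f) = 0 ∧
      MvPolynomial.eval s (complexify g) = 0)
    (hSsplit : ∀ q : Fin 3 → ℂ, q ≠ 0 →
      MvPolynomial.eval q (complexify f) = 0 →
      MvPolynomial.eval q (complexify g) = 0 →
      ∃! s, s ∈ S ∪ conjPt '' S ∧ ∃ lam : ℂ, lam ≠ 0 ∧ q = lam • s)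
    (hSconj : ∀ s ∈ S, ∀ s' ∈ S, ∀ lam : ℂ, lam ≠ 0 → s ≠ lam • conjPt s')
    (a : Fin d → MvPolynomial (Fin 3) ℂ)
    (ha1 : a ⟨0, hd⟩ = complexify g)
    (hahom : ∀ i, (a i).IsHomogeneous (d - 1))
    (havan : ∀ i, ∀ s ∈ S, MvPolynomial.eval s (a i) = 0)
    (haindep : LinearIndependent ℂ a)
    (haspan : ∀ h : MvPolynomial (Fin 3) ℂ, h.IsHomogeneous (d - 1) →
      (∀ s ∈ S, MvPolynomial.eval s h = 0) → h ∈ Submodule.span ℂ (Set.range a)) :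
    (∃! T : Matrix (Fin d) (Fin d) ℂ × Matrix (Fin d) (Fin d) ℂ ×
        Matrix (Fin d) (Fin d) ℂ,
      T.1.IsHermitian ∧ T.2.1.IsHermitian ∧ T.2.2.IsHermitian ∧
      (∀ j, ∑ i, a i * pencil T.1 T.2.1 T.2.2 i j =
        if j = ⟨0, hd⟩ then complexify f else 0) ∧
      (∀ i, ∑ j, pencil T.1 T.2.1 T.2.2 i j * MvPolynomial.map (starRingEnd ℂ) (a j) =
        if i = ⟨0, hd⟩ then complexify f else 0)) ∧
    ∀ T : Matrix (Fin d) (Fin d) ℂ × Matrix (Fin d) (Fin d) ℂ ×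
        Matrix (Fin d) (Fin d) ℂ,
      T.1.IsHermitian → T.2.1.IsHermitian → T.2.2.IsHermitian →
      (∀ j, ∑ i, a i * pencil T.1 T.2.1 T.2.2 i j =
        if j = ⟨0, hd⟩ then complexify f else 0) →
      (∀ i, ∑ j, pencil T.1 T.2.1 T.2.2 i j * MvPolynomial.map (starRingEnd ℂ) (a j) =
        if i = ⟨0, hd⟩ then complexify f else 0) →
      (∃ c : ℝ, 0 < c ∧
        complexify f = MvPolynomial.C (c : ℂ) * (pencil T.1 T.2.1 T.2.2).det) ∧
      ((e 0 : ℂ) • T.1 + (e 1 : ℂ) • T.2.1 + (e 2 : ℂ) • T.2.2).PosDef := by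
  obtain ⟨⟨T, ⟨hrow, hcolumn⟩, hunique⟩, hT⟩ :=
    hermitian_determinantal_representation_interlacer_general ⟨0, hd⟩ hfhom hfe hghom hge hint
      ⟨hS, hSsplit, hSconj⟩ ha1 hahom havan haindep haspan
  obtain ⟨hT₁, hT₂, hT₃⟩ := (hT T hrow hcolumn).1
  exact ⟨⟨T, ⟨hT₁, hT₂, hT₃, hrow, hcolumn⟩, fun T' hT' => hunique T' hT'.2.2.2⟩,
    fun T' _ _ _ hrow' hcolumn' => (hT T' hrow' hcolumn').2⟩
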